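/- arXiv:2002.11809 — 2 statements merged into one kernel-verified Lean document; each statement's English description precedes it below -/
import Mathlib

section
/- Let (D*_1, D*_2) be a random vector with the limiting bidegree distribution \bar f_2, under a power-law layer type distribution. Denote δ_t = t^{1/2} ln⁴(2+t). Then for t_1, t_2 → ∞ such that (t_2 − t_1)/δ_{t_2} → ∞, one has P(D*_1 = t_1, D*_2 = t_2) = (1 + o(1)) c'' (t_2 − t_1)^{−1−(α−2)/(1−β)} t_1^{−(α−2)/(1−β)}, where c'' = μ a² b^{2(α−2)/(1−β)} (1−β)^{−2} P_{21}^{−1}. -/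
open MeasureTheory ProbabilityTheory Filter
open scoped ENNReal Topology Classical

noncomputable section

/-- The binomial probability mass function `Bin(x,y)(s)`. -/
def binP (x : ℕ) (y : ℝ) (s : ℕ) : ℝ := (x.choose s : ℝ) * y ^ s * (1 - y) ^ (x - s)

/-- Convolution of (mass) functions on `ℕ`. -/
def conv (f g : ℕ → ℝ) (s : ℕ) : ℝ := ∑ i ∈ Finset.range (s + 1), f i * g (s - i)

/-- Iterated convolution power: `convPow f j` is the `j`-fold convolution of `f`. -/
def convPow (f : ℕ → ℝ) : ℕ → ℕ → ℝ
  | 0 => fun s => if s = 0 then 1 else 0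
  | j + 1 => conv f (convPow f j)

/-- The compound Poisson probability mass function `CPoi(lam, f)`, i.e. the law of
`H_1 + ⋯ + H_Λ` where `Λ ~ Poi(lam)` and the `H_k` are i.i.d. with mass function `f`,
independent of `Λ`. -/
def cpoi (lam : ℝ) (f : ℕ → ℝ) (s : ℕ) : ℝ :=
  ∑' j : ℕ, Real.exp (-lam) * lam ^ j / (j.factorial : ℝ) * convPow f j s

/-- Convolution of (mass) functions on `ℕ × ℕ`. -/
def conv2 (F G : ℕ → ℕ → ℝ) (s t : ℕ) : ℝ :=
  ∑ i ∈ Finset.range (s + 1), ∑ j ∈ Finset.range (t + 1), F i j * G (s - i) (t - j)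

/-- Point mass at `(1,1)`, as a mass function on `ℕ × ℕ`. -/
def delta11 (s t : ℕ) : ℝ := if s = 1 ∧ t = 1 then 1 else 0

/-- The cross moment `P_{rs} = E[(X)_r Y^s]` for the layer type distribution
`P(dx,dy) = p(dx) δ_{q(x)}(dy)`. -/
def mom (p q : ℕ → ℝ) (r s : ℕ) : ℝ :=
  ∑' x : ℕ, (x.descFactorial r : ℝ) * q x ^ s * p x

/-- The increment distribution `g(s) = ∫ Bin(x-1,y)(s) x P(dx,dy) / P₁₀` for
`P(dx,dy) = p(dx) δ_{q(x)}(dy)`. -/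
def gInc (p q : ℕ → ℝ) (s : ℕ) : ℝ :=
  (∑' x : ℕ, (x : ℝ) * binP (x - 1) (q x) s * p x) / mom p q 1 0

/-- The limiting degree distribution `\bar f₁ = CPoi(μ P₁₀, g)`. -/
def barf1 (mu : ℝ) (p q : ℕ → ℝ) (s : ℕ) : ℝ :=
  cpoi (mu * mom p q 1 0) (gInc p q) s

/-- The distribution `f₂'` of `(D₁', D₂')`:
`f₂'(s,t) = ∫ Bin(x-2,y)(s) Bin(x-2,y)(t) (x)₂ y P(dx,dy) / P₂₁` for
`P(dx,dy) = p(dx) δ_{q(x)}(dy)`. -/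
def f2p (p q : ℕ → ℝ) (s t : ℕ) : ℝ :=
  (∑' x : ℕ, (x.descFactorial 2 : ℝ) * q x * binP (x - 2) (q x) s * binP (x - 2) (q x) t * p x) /
    mom p q 2 1

/-- The limiting bidegree distribution `\bar f₂ = δ₍₁,₁₎ ∗ (\bar f₁ ⊗ \bar f₁) ∗ f₂'`,
i.e. the joint law of `(D₁*, D₂*) = (1 + D₁ + D₁', 1 + D₂ + D₂')` where `D₁`, `D₂`,
`(D₁', D₂')` are mutually independent, `D₁, D₂ ~ \bar f₁` and `(D₁', D₂') ~ f₂'`. -/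
def barf2 (mu : ℝ) (p q : ℕ → ℝ) : ℕ → ℕ → ℝ :=
  conv2 (conv2 delta11 fun s t => barf1 mu p q s * barf1 mu p q t) (f2p p q)

/-- `δ_t = t^{1/2} ln⁴(2+t)`. -/
def deltaFn (t : ℕ) : ℝ := Real.sqrt t * Real.log (2 + (t : ℝ)) ^ (4 : ℕ)

/-!
A layer of size `x` contributes `Bin (x - r, q x)` links, of mean asymptotic to `b x ^ (1 - β)`. As
`s → ∞` with `b x ^ (1 - β) ∼ s`, the decrement in `x` of the distribution function of this law at
`s` is asymptotic to `(1 - β) * q x` times its mass at `s`. With power-law weights `w`, the mixture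
`∑ x, w x * Bin (x - r, q x) s` is therefore a regularly varying factor `w x / ((1 - β) * q x)`,
essentially constant where the law charges `s`, times a sum of decrements which telescopes to `1`;
this yields the power laws of `g` and of the first marginal of `f₂'`. The compound Poisson law
`f̄₁` satisfies the recursion `n f̄₁(n) = μ P₁₀ ∑ k g(k) f̄₁(n - k)`, which transfers the tail of
`g` to `f̄₁`.

Finally `(D₁', D₂')` lies within `δ` of the diagonal up to superpolynomially small probability.
When `t₂ - t₁ ≫ δ` the event `D₁* = t₁`, `D₂* = t₂` thus forces `D₂` to bridge the gap, up to a
relative error `o(1)`, and the probability factorises asymptotically as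
`f̄₁(t₂ - t₁) * P(D₁ + D₁' = t₁ - 1)`. The second factor has the heavier tail of `D₁'`, of exponent
`(α - 2) / (1 - β)` rather than `1 + (α - 2) / (1 - β)`.
-/

/-! ### Binomial probabilities -/

section Binomial

variable {n : ℕ} {y : ℝ}

lemma binP_eq_eval_bernsteinPolynomial (n : ℕ) (y : ℝ) (s : ℕ) :
    binP n y s = (bernsteinPolynomial ℝ n s).eval y := by
  simp [binP, bernsteinPolynomial]

lemma binP_nonneg (n : ℕ) (hy : y ∈ Set.Icc (0 : ℝ) 1) (s : ℕ) : 0 ≤ binP n y s := by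
  have h0 := hy.1
  have h1 : 0 ≤ 1 - y := sub_nonneg.2 hy.2
  unfold binP
  positivity

lemma binP_eq_zero_of_lt {s : ℕ} (h : n < s) (y : ℝ) : binP n y s = 0 := by
  simp [binP, Nat.choose_eq_zero_of_lt h]

lemma sum_range_binP (n : ℕ) (y : ℝ) : ∑ k ∈ Finset.range (n + 1), binP n y k = 1 := by
  simpa [Polynomial.eval_finsetSum, ← binP_eq_eval_bernsteinPolynomial] using
    congrArg (Polynomial.eval y) (bernsteinPolynomial.sum ℝ n)

lemma hasSum_binP (n : ℕ) (y : ℝ) : HasSum (binP n y) 1 := by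
  rw [← sum_range_binP n y]
  exact hasSum_sum_of_ne_finset_zero fun k hk =>
    binP_eq_zero_of_lt (by simpa [Nat.lt_succ_iff] using hk) y

lemma sum_binP_le_one (n : ℕ) (hy : y ∈ Set.Icc (0 : ℝ) 1) (A : Finset ℕ) :
    ∑ k ∈ A, binP n y k ≤ 1 :=
  sum_le_hasSum A (fun k _ => binP_nonneg n hy k) (hasSum_binP n y)

lemma binP_le_one (n : ℕ) (hy : y ∈ Set.Icc (0 : ℝ) 1) (s : ℕ) : binP n y s ≤ 1 := by
  simpa using sum_binP_le_one n hy {s}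

lemma sum_range_sq_sub_mul_binP (n : ℕ) (y : ℝ) :
    ∑ k ∈ Finset.range (n + 1), ((k : ℝ) - n * y) ^ 2 * binP n y k = n * y * (1 - y) := by
  have h := congrArg (Polynomial.eval y) (bernsteinPolynomial.variance ℝ n)
  simp only [Polynomial.eval_finsetSum, Polynomial.eval_mul, Polynomial.eval_pow,
    Polynomial.eval_sub, nsmul_eq_mul, Polynomial.eval_natCast, Polynomial.eval_X,
    Polynomial.eval_one, ← binP_eq_eval_bernsteinPolynomial] at h
  rw [← h]
  exact Finset.sum_congr rfl fun k _ => by ring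

lemma sum_binP_le_div_sq (hy : y ∈ Set.Icc (0 : ℝ) 1) {A : Finset ℕ} {z : ℝ} (hz : 0 < z)
    (hA : ∀ k ∈ A, z ≤ |(k : ℝ) - n * y|) : ∑ k ∈ A, binP n y k ≤ n * y / z ^ 2 := by
  have hnn : ∀ k : ℕ, 0 ≤ ((k : ℝ) - n * y) ^ 2 * binP n y k := fun k =>
    mul_nonneg (sq_nonneg _) (binP_nonneg n hy k)
  have hvar : HasSum (fun k : ℕ => ((k : ℝ) - n * y) ^ 2 * binP n y k) (n * y * (1 - y)) := by
    rw [← sum_range_sq_sub_mul_binP]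
    refine hasSum_sum_of_ne_finset_zero fun k hk => ?_
    rw [binP_eq_zero_of_lt (by simpa [Nat.lt_succ_iff] using hk), mul_zero]
  rw [le_div_iff₀ (by positivity), Finset.sum_mul]
  calc ∑ k ∈ A, binP n y k * z ^ 2
      ≤ ∑ k ∈ A, ((k : ℝ) - n * y) ^ 2 * binP n y k := by
        refine Finset.sum_le_sum fun k hk => ?_
        rw [mul_comm, ← sq_abs ((k : ℝ) - n * y)]
        have := binP_nonneg n hy k
        gcongr
        exact hA k hk
    _ ≤ n * y * (1 - y) := sum_le_hasSum A (fun k _ => hnn k) hvar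
    _ ≤ n * y := mul_le_of_le_one_right (mul_nonneg n.cast_nonneg hy.1) (by linarith [hy.1])

lemma one_sub_div_sq_le_sum_binP (hy : y ∈ Set.Icc (0 : ℝ) 1) {A : Finset ℕ} {z : ℝ} (hz : 0 < z)
    (hA : ∀ k : ℕ, |(k : ℝ) - n * y| < z → k ∈ A) :
    1 - n * y / z ^ 2 ≤ ∑ k ∈ A, binP n y k := by
  have hin : ∑ k ∈ Finset.range (n + 1) ∩ A, binP n y k ≤ ∑ k ∈ A, binP n y k :=
    Finset.sum_le_sum_of_subset_of_nonneg Finset.inter_subset_right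
      fun k _ _ => binP_nonneg n hy k
  have hout : ∑ k ∈ Finset.range (n + 1) \ A, binP n y k ≤ n * y / z ^ 2 :=
    sum_binP_le_div_sq hy hz fun k hk =>
      not_lt.1 fun h => (Finset.mem_sdiff.1 hk).2 (hA k h)
  have := Finset.sum_inter_add_sum_sdiff (Finset.range (n + 1)) A (binP n y)
  rw [sum_range_binP] at this
  linarith

lemma binP_mul_pow_le (n : ℕ) (hy : y ∈ Set.Icc (0 : ℝ) 1) (s : ℕ) {θ : ℝ} (hθ : 0 ≤ θ) :
    binP n y s * θ ^ s ≤ Real.exp (n * y * (θ - 1)) := by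
  rcases lt_or_ge n s with hs | hs
  · rw [binP_eq_zero_of_lt hs, zero_mul]
    positivity
  have h0 := hy.1
  have h1 : 0 ≤ 1 - y := sub_nonneg.2 hy.2
  calc binP n y s * θ ^ s = (y * θ) ^ s * (1 - y) ^ (n - s) * n.choose s := by
        rw [binP, mul_pow]; ring
    _ ≤ ∑ k ∈ Finset.range (n + 1), (y * θ) ^ k * (1 - y) ^ (n - k) * n.choose k :=
        Finset.single_le_sum (f := fun k => (y * θ) ^ k * (1 - y) ^ (n - k) * (n.choose k : ℝ))
          (fun k _ => by positivity) (Finset.mem_range.2 (Nat.lt_succ_of_le hs))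
    _ = (y * (θ - 1) + 1) ^ n := by rw [← add_pow]; ring
    _ ≤ Real.exp (y * (θ - 1)) ^ n := by
        have : 0 ≤ y * (θ - 1) + 1 := by linarith [mul_nonneg h0 hθ]
        gcongr
        exact Real.add_one_le_exp _
    _ = Real.exp (n * y * (θ - 1)) := by rw [← Real.exp_nat_mul, mul_assoc]

lemma binP_le_exp_neg_sq_div (n : ℕ) (hy : y ∈ Set.Icc (0 : ℝ) 1) (s : ℕ) :
    binP n y s ≤ Real.exp (-(((s : ℝ) - n * y) ^ 2 / (2 * (s + n * y)))) := by
  have hm : 0 ≤ n * y := mul_nonneg n.cast_nonneg hy.1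
  set m := n * y
  rcases s.eq_zero_or_pos with rfl | hs
  · have h := binP_mul_pow_le n hy 0 (θ := 1 / 2) (by norm_num)
    rw [pow_zero, mul_one] at h
    refine h.trans_eq (congrArg Real.exp ?_)
    rcases hm.eq_or_lt with hm | hm
    · simp [m, ← hm]
    · simp only [Nat.cast_zero]
      field_simp
      ring
  · have hs : (0 : ℝ) < s := by exact_mod_cast hs
    -- the minimiser `s / m` of the exponent gives no closed form; `θ = 2 s / (s + m)` does
    have hθ : 0 < 2 * s / (s + m) := by positivity
    have hlog : s * (1 - (2 * s / (s + m))⁻¹) ≤ s * Real.log (2 * s / (s + m)) :=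
      mul_le_mul_of_nonneg_left (Real.one_sub_inv_le_log_of_pos hθ) hs.le
    have hexp : m * (2 * s / (s + m) - 1) - s * (1 - (2 * s / (s + m))⁻¹) =
        -(((s : ℝ) - m) ^ 2 / (2 * (s + m))) := by
      field_simp
      ring
    calc binP n y s ≤ Real.exp (m * (2 * s / (s + m) - 1)) / (2 * s / (s + m)) ^ s :=
          (le_div_iff₀ (by positivity)).2 (binP_mul_pow_le n hy s hθ.le)
      _ = Real.exp (m * (2 * s / (s + m) - 1) - s * Real.log (2 * s / (s + m))) := by
          rw [Real.exp_sub, Real.exp_nat_mul, Real.exp_log hθ]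
      _ ≤ _ := Real.exp_le_exp.2 (by linarith)

lemma binP_le_exp_of_le_abs_sub (hy : y ∈ Set.Icc (0 : ℝ) 1) {s : ℕ} {z : ℝ} (hz : 0 < z)
    (h : z ≤ |(s : ℝ) - n * y|) : binP n y s ≤ Real.exp (-(z ^ 2 / (2 * (2 * s + z)))) := by
  refine (binP_le_exp_neg_sq_div n hy s).trans (Real.exp_le_exp.2 (neg_le_neg ?_))
  have hm : 0 ≤ n * y := mul_nonneg n.cast_nonneg hy.1
  set m := n * y
  set Z := |(s : ℝ) - m| with hZ
  have hmZ : m ≤ s + Z := by linarith [neg_abs_le ((s : ℝ) - m)]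
  have hpos : 0 < (s : ℝ) + m := by
    by_contra! hneg
    have hs : (s : ℝ) = 0 := le_antisymm (by linarith) s.cast_nonneg
    have : Z = 0 := by rw [hZ, hs, le_antisymm (by linarith) hm]; simp
    linarith
  calc z ^ 2 / (2 * (2 * s + z)) ≤ Z ^ 2 / (2 * (2 * s + Z)) := by
        have hZ0 : 0 < Z := hz.trans_le h
        rw [div_le_div_iff₀ (by positivity) (by positivity)]
        have h2 : z ^ 2 ≤ Z ^ 2 := by gcongr
        have h3 : z * Z * z ≤ z * Z * Z := by gcongr
        nlinarith [mul_le_mul_of_nonneg_right h2 s.cast_nonneg (α := ℝ)]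
    _ ≤ Z ^ 2 / (2 * (s + m)) :=
        div_le_div_of_nonneg_left (sq_nonneg Z) (by positivity) (by linarith)
    _ = ((s : ℝ) - m) ^ 2 / (2 * (s + m)) := by rw [sq_abs]

lemma binP_le_binP_mul_exp (n s : ℕ) {z : ℝ} (hy : y ∈ Set.Ioo (0 : ℝ) 1)
    (hz : z ∈ Set.Icc (0 : ℝ) 1) :
    binP n z s ≤ binP n y s * Real.exp ((z - y) * (s - n * y) / (y * (1 - y))) := by
  obtain ⟨hy0, hy1⟩ := hy
  rcases lt_or_ge n s with h | h
  · simp [binP_eq_zero_of_lt h]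
  have : 0 < 1 - y := by linarith
  have h1z : 0 ≤ 1 - z := by linarith [hz.2]
  have hsucc : z ^ s ≤ y ^ s * Real.exp (s * ((z - y) / y)) := by
    rw [Real.exp_nat_mul, ← mul_pow]
    refine pow_le_pow_left₀ hz.1 ?_ s
    calc z = y * ((z - y) / y + 1) := by field_simp; ring
      _ ≤ y * Real.exp ((z - y) / y) := by gcongr; exact Real.add_one_le_exp _
  have hfail : (1 - z) ^ (n - s) ≤
      (1 - y) ^ (n - s) * Real.exp ((n - s : ℕ) * ((y - z) / (1 - y))) := by
    rw [Real.exp_nat_mul, ← mul_pow]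
    refine pow_le_pow_left₀ h1z ?_ _
    calc 1 - z = (1 - y) * ((y - z) / (1 - y) + 1) := by field_simp; ring
      _ ≤ (1 - y) * Real.exp ((y - z) / (1 - y)) := by gcongr; exact Real.add_one_le_exp _
  have hexp : (z - y) * (s - n * y) / (y * (1 - y)) =
      s * ((z - y) / y) + (n - s : ℕ) * ((y - z) / (1 - y)) := by
    rw [Nat.cast_sub h]
    field_simp
    ring
  calc binP n z s ≤ n.choose s * (y ^ s * Real.exp (s * ((z - y) / y))) *
        ((1 - y) ^ (n - s) * Real.exp ((n - s : ℕ) * ((y - z) / (1 - y)))) := by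
        unfold binP
        gcongr
    _ = _ := by rw [hexp, Real.exp_add, binP]; ring

end Binomial

/-! ### Binomial distribution functions -/

/-- The distribution function `P(Bin(n, y) ≤ s)`. -/
def binCDF (n : ℕ) (y : ℝ) (s : ℕ) : ℝ := ∑ k ∈ Finset.range (s + 1), binP n y k

lemma binCDF_nonneg (n : ℕ) {y : ℝ} (hy : y ∈ Set.Icc (0 : ℝ) 1) (s : ℕ) : 0 ≤ binCDF n y s :=
  Finset.sum_nonneg fun k _ => binP_nonneg n hy k

lemma binCDF_le_one (n : ℕ) {y : ℝ} (hy : y ∈ Set.Icc (0 : ℝ) 1) (s : ℕ) : binCDF n y s ≤ 1 :=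
  sum_binP_le_one n hy _

lemma binP_succ_succ (n k : ℕ) (y : ℝ) :
    binP (n + 1) y (k + 1) = y * binP n y k + (1 - y) * binP n y (k + 1) := by
  unfold binP
  rw [Nat.choose_succ_succ, Nat.add_sub_add_right]
  rcases lt_or_ge k n with h | h
  · rw [show n - k = n - (k + 1) + 1 by omega]
    push_cast
    ring
  · rw [Nat.choose_eq_zero_of_lt (Nat.lt_succ_of_le h), Nat.sub_eq_zero_of_le h]
    push_cast
    ring

lemma binCDF_succ_left (n : ℕ) (y : ℝ) (s : ℕ) :
    binCDF (n + 1) y s = binCDF n y s - y * binP n y s := by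
  induction s with
  | zero => simp [binCDF, binP]; ring
  | succ s ih =>
    have hsucc : ∀ N, binCDF N y (s + 1) = binCDF N y s + binP N y (s + 1) := fun N =>
      Finset.sum_range_succ _ _
    rw [hsucc, hsucc, ih, binP_succ_succ]
    ring

lemma hasDerivAt_binCDF (n : ℕ) (y : ℝ) (s : ℕ) :
    HasDerivAt (fun y => binCDF (n + 1) y s) (-((n + 1) * binP n y s)) y := by
  have hderiv : Polynomial.derivative (∑ k ∈ Finset.range (s + 1), bernsteinPolynomial ℝ (n + 1) k)
      = -((n + 1 : ℕ) * bernsteinPolynomial ℝ n s) := by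
    induction s with
    | zero =>
      rw [zero_add, Finset.range_one, Finset.sum_singleton, bernsteinPolynomial.derivative_zero,
        neg_mul, Nat.add_sub_cancel]
    | succ s ih =>
      rw [Finset.sum_range_succ, Polynomial.derivative_add, ih,
        bernsteinPolynomial.derivative_succ, Nat.add_sub_cancel]
      ring
  have h := Polynomial.hasDerivAt
    (∑ k ∈ Finset.range (s + 1), bernsteinPolynomial ℝ (n + 1) k) y
  rw [hderiv] at h
  simpa [binCDF, binP_eq_eval_bernsteinPolynomial, Polynomial.eval_finsetSum] using h

lemma tendsto_binCDF_one {N : ℕ → ℕ} {y : ℕ → ℝ} (hy : ∀ s, y s ∈ Set.Icc (0 : ℝ) 1) {c : ℝ}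
    (hc : c < 1) (hmean : ∀ᶠ s in atTop, N s * y s ≤ c * (s : ℝ)) :
    Tendsto (fun s => binCDF (N s) (y s) s) atTop (𝓝 1) := by
  have hlow : Tendsto (fun s : ℕ => 1 - c / (1 - c) ^ 2 / s) atTop (𝓝 1) := by
    simpa using
      (tendsto_const_div_atTop_nhds_zero_nat (c / (1 - c) ^ 2)).const_sub (1 : ℝ)
  refine tendsto_of_tendsto_of_tendsto_of_le_of_le' hlow tendsto_const_nhds ?_
    (.of_forall fun s => binCDF_le_one _ (hy s) s)
  filter_upwards [hmean, eventually_gt_atTop 0] with s hs hs0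
  have hs0 : (0 : ℝ) < s := by exact_mod_cast hs0
  have h1c : 0 < 1 - c := by linarith
  calc 1 - c / (1 - c) ^ 2 / s = 1 - c * s / ((1 - c) * s) ^ 2 := by field_simp
    _ ≤ 1 - N s * y s / ((1 - c) * s) ^ 2 := by gcongr
    _ ≤ binCDF (N s) (y s) s :=
        one_sub_div_sq_le_sum_binP (hy s) (mul_pos h1c hs0) fun k hk => by
          have hlt : (k : ℝ) < s := by linarith [(abs_lt.1 hk).2]
          exact Finset.mem_range_succ_iff.2 (Nat.cast_lt.1 hlt).le

lemma tendsto_binCDF_zero {N : ℕ → ℕ} {y : ℕ → ℝ} (hy : ∀ s, y s ∈ Set.Icc (0 : ℝ) 1) {c : ℝ}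
    (hc : 1 < c) (hmean : ∀ᶠ s : ℕ in atTop, c * (s : ℝ) ≤ N s * y s) :
    Tendsto (fun s => binCDF (N s) (y s) s) atTop (𝓝 0) := by
  have hupp : Tendsto (fun s : ℕ => (c * (1 - c⁻¹) ^ 2)⁻¹ / (s : ℝ)) atTop (𝓝 0) :=
    tendsto_const_div_atTop_nhds_zero_nat _
  refine tendsto_of_tendsto_of_tendsto_of_le_of_le' tendsto_const_nhds hupp
    (.of_forall fun s => binCDF_nonneg _ (hy s) s) ?_
  filter_upwards [hmean, eventually_gt_atTop 0] with s hs hs0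
  have hs0 : (0 : ℝ) < s := by exact_mod_cast hs0
  have hc0 : 0 < c := one_pos.trans hc
  have h1c : 0 < 1 - c⁻¹ := sub_pos.2 (inv_lt_one_of_one_lt₀ hc)
  have hm : 0 < N s * y s := (mul_pos hc0 hs0).trans_le hs
  calc binCDF (N s) (y s) s ≤ N s * y s / ((1 - c⁻¹) * (N s * y s)) ^ 2 := by
        refine sum_binP_le_div_sq (hy s) (mul_pos h1c hm) fun k hk => ?_
        have hk : (k : ℝ) ≤ s := by exact_mod_cast Finset.mem_range_succ_iff.1 hk
        have : (s : ℝ) ≤ c⁻¹ * (N s * y s) := by rwa [← div_eq_inv_mul, le_div_iff₀' hc0]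
        rw [abs_sub_comm]
        refine le_trans ?_ (le_abs_self _)
        linarith
    _ = ((1 - c⁻¹) ^ 2)⁻¹ / (N s * y s) := by field_simp
    _ ≤ ((1 - c⁻¹) ^ 2)⁻¹ / (c * s) := by gcongr
    _ = (c * (1 - c⁻¹) ^ 2)⁻¹ / s := by rw [mul_inv, div_mul_eq_div_div_swap]; ring

lemma binP_le_binP_mul_exp_of_mem_Icc (n s : ℕ) {y y' u v : ℝ} (hy' : 0 < y') (hy : y < 1)
    (hu : u ∈ Set.Icc y' y) (hv : v ∈ Set.Icc y' y) :
    binP n u s ≤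
      binP n v s * Real.exp ((y - y') * (|(s : ℝ) - n * y| + n * (y - y')) / (y' * (1 - y))) := by
  have hle : y' ≤ y := hu.1.trans hu.2
  refine (binP_le_binP_mul_exp n s ⟨hy'.trans_le hv.1, hv.2.trans_lt hy⟩
    ⟨hy'.le.trans hu.1, hu.2.trans hy.le⟩).trans ?_
  have hv0 : 0 ≤ binP n v s := binP_nonneg n ⟨hy'.le.trans hv.1, hv.2.trans hy.le⟩ s
  have h1y : 0 < 1 - y := by linarith
  have : 0 ≤ y - y' := by linarith
  have hdev : |(s : ℝ) - n * v| ≤ |(s : ℝ) - n * y| + n * (y - y') := by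
    calc |(s : ℝ) - n * v| = |((s : ℝ) - n * y) + n * (y - v)| := by congr 1; ring
      _ ≤ |(s : ℝ) - n * y| + |n * (y - v)| := abs_add_le _ _
      _ ≤ |(s : ℝ) - n * y| + n * (y - y') := by
        rw [abs_of_nonneg (mul_nonneg n.cast_nonneg (sub_nonneg.2 hv.2))]
        gcongr
        exact hv.1
  have hnum : (u - v) * (s - n * v) ≤ (y - y') * (|(s : ℝ) - n * y| + n * (y - y')) := by
    refine (le_abs_self _).trans ?_
    rw [abs_mul]
    gcongr
    rw [abs_le]
    constructor <;> linarith [hu.1, hu.2, hv.1, hv.2]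
  have hden : y' * (1 - y) ≤ v * (1 - v) :=
    mul_le_mul hv.1 (by linarith [hv.2]) h1y.le (hy'.le.trans hv.1)
  gcongr

lemma exists_binCDF_sub_binCDF_succ (n s : ℕ) {y y' : ℝ} (hle : y' ≤ y) (hy' : 0 < y')
    (hy : y < 1) :
    ∃ θ ∈ Set.Icc
        (Real.exp (-((y - y') * (|(s : ℝ) - n * y| + n * (y - y')) / (y' * (1 - y)))))
        (Real.exp ((y - y') * (|(s : ℝ) - n * y| + n * (y - y')) / (y' * (1 - y)))),
      binCDF n y s - binCDF (n + 1) y' s =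
        y * binP n y s * (1 - (n + 1) * (y - y') / y * θ) := by
  have hy0 : 0 < y := hy'.trans_le hle
  have hd : 0 ≤ y - y' := sub_nonneg.2 hle
  have h1y : 0 < 1 - y := sub_pos.2 hy
  obtain ⟨ξ, hξ, hmvt⟩ : ∃ ξ ∈ Set.Icc y' y,
      binCDF (n + 1) y s - binCDF (n + 1) y' s = -((n + 1) * binP n ξ s) * (y - y') := by
    rcases hle.eq_or_lt with rfl | hlt
    · exact ⟨y', Set.left_mem_Icc.2 le_rfl, by simp⟩
    · obtain ⟨ξ, hξ, h⟩ := exists_hasDerivAt_eq_slope (fun y => binCDF (n + 1) y s) _ hlt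
        (fun t _ => (hasDerivAt_binCDF n t s).continuousAt.continuousWithinAt)
        (fun t _ => hasDerivAt_binCDF n t s)
      exact ⟨ξ, Set.Ioo_subset_Icc_self hξ, ((eq_div_iff (by linarith)).1 h).symm⟩
  have hstep := binCDF_succ_left n y s
  have hup := binP_le_binP_mul_exp_of_mem_Icc n s hy' hy hξ (Set.right_mem_Icc.2 hle)
  have hlow := binP_le_binP_mul_exp_of_mem_Icc n s hy' hy (Set.right_mem_Icc.2 hle) hξ
  set M := (y - y') * (|(s : ℝ) - n * y| + n * (y - y')) / (y' * (1 - y)) with hM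
  rcases (binP_nonneg n ⟨hy0.le, hy.le⟩ s).eq_or_lt with hzero | hpos
  · have hM0 : 0 ≤ M := by positivity
    have : binP n ξ s = 0 := le_antisymm (by rwa [← hzero, zero_mul] at hup)
      (binP_nonneg n ⟨hy'.le.trans hξ.1, hξ.2.trans hy.le⟩ s)
    refine ⟨1, ⟨Real.exp_le_one_iff.2 (by linarith), Real.one_le_exp hM0⟩, ?_⟩
    rw [this] at hmvt
    rw [← hzero] at hstep ⊢
    linarith
  · refine ⟨binP n ξ s / binP n y s, ⟨?_, (div_le_iff₀' hpos).2 hup⟩, ?_⟩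
    · rw [Real.exp_neg, ← one_div, div_le_div_iff₀ (Real.exp_pos _) hpos, one_mul]
      exact hlow
    · have : y * binP n y s * (1 - (n + 1) * (y - y') / y * (binP n ξ s / binP n y s)) =
          y * binP n y s - (n + 1) * binP n ξ s * (y - y') := by field_simp
      linarith

/-! ### Power-law layer strengths -/

lemma tendsto_natCast_sub_add_one_div (r : ℕ) :
    Tendsto (fun x : ℕ => (((x - r : ℕ) : ℝ) + 1) / x) atTop (𝓝 1) := by
  have h : Tendsto (fun x : ℕ => 1 + (1 - (r : ℝ)) * (x : ℝ)⁻¹) atTop (𝓝 1) := by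
    simpa using ((tendsto_inv_atTop_nhds_zero_nat (𝕜 := ℝ)).const_mul (1 - (r : ℝ))).const_add 1
  refine h.congr' ?_
  filter_upwards [eventually_gt_atTop r] with x hx
  have : (x : ℝ) ≠ 0 := by exact_mod_cast (by omega : x ≠ 0)
  rw [Nat.cast_sub hx.le]
  field_simp
  ring

lemma tendsto_one_div_natCast_sub_add_one (r : ℕ) :
    Tendsto (fun x : ℕ => 1 / (((x - r : ℕ) : ℝ) + 1)) atTop (𝓝 0) :=
  (tendsto_one_div_add_atTop_nhds_zero_nat (𝕜 := ℝ)).comp (tendsto_sub_atTop_nat r)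

/-- The layer strength `q(x) = min {1, b x^{-β}}` of the paper, with its parameter ranges. -/
structure IsPowerLawStrength (b β : ℝ) (q : ℕ → ℝ) : Prop where
  b_pos : 0 < b
  β_nonneg : 0 ≤ β
  β_lt_one : β < 1
  b_lt_one : β = 0 → b < 1
  eq_min : ∀ x : ℕ, q x = min 1 (b * (x : ℝ) ^ (-β))

namespace IsPowerLawStrength

variable {b β : ℝ} {q : ℕ → ℝ}

lemma one_sub_pos (h : IsPowerLawStrength b β q) : 0 < 1 - β := sub_pos.2 h.β_lt_one

lemma pos (h : IsPowerLawStrength b β q) {x : ℕ} (hx : 0 < x) : 0 < q x := by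
  have := h.b_pos
  have : (0 : ℝ) < x := by exact_mod_cast hx
  rw [h.eq_min]
  exact lt_min one_pos (by positivity)

lemma mem_Icc (h : IsPowerLawStrength b β q) (x : ℕ) : q x ∈ Set.Icc (0 : ℝ) 1 := by
  have := h.b_pos
  rw [h.eq_min]
  exact ⟨le_min zero_le_one (by positivity), min_le_left _ _⟩

lemma exists_tendsto (h : IsPowerLawStrength b β q) : ∃ l < 1, Tendsto q atTop (𝓝 l) := by
  rcases h.β_nonneg.eq_or_lt with hβ | hβ
  · refine ⟨b, h.b_lt_one hβ.symm, tendsto_const_nhds.congr fun x => ?_⟩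
    simp [h.eq_min, ← hβ, (h.b_lt_one hβ.symm).le]
  · refine ⟨0, one_pos, ?_⟩
    have hlim := (tendsto_const_nhds (x := (1 : ℝ))).min
      (((tendsto_rpow_neg_atTop hβ).comp tendsto_natCast_atTop_atTop).const_mul b)
    simpa only [mul_zero, min_eq_right zero_le_one] using
      hlim.congr fun x => (h.eq_min x).symm

lemma eventually_lt_one (h : IsPowerLawStrength b β q) : ∀ᶠ x in atTop, q x < 1 :=
  let ⟨_, hl, hq⟩ := h.exists_tendsto
  hq.eventually_lt_const hl

lemma eventually_eq (h : IsPowerLawStrength b β q) :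
    ∀ᶠ x : ℕ in atTop, q x = b * (x : ℝ) ^ (-β) := by
  filter_upwards [h.eventually_lt_one] with x hx
  rw [h.eq_min] at hx ⊢
  exact min_eq_right ((min_lt_iff.1 hx).resolve_left (lt_irrefl 1)).le

lemma succ_le (h : IsPowerLawStrength b β q) {x : ℕ} (hx : 0 < x) : q (x + 1) ≤ q x := by
  have hx : (0 : ℝ) < x := by exact_mod_cast hx
  rw [h.eq_min, h.eq_min]
  refine min_le_min le_rfl (mul_le_mul_of_nonneg_left ?_ h.b_pos.le)
  exact Real.rpow_le_rpow_of_nonpos hx (by push_cast; linarith) (by linarith [h.β_nonneg])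

lemma tendsto_decrement (h : IsPowerLawStrength b β q) (r : ℕ) :
    Tendsto (fun x : ℕ => (((x - r : ℕ) : ℝ) + 1) * (q x - q (x + 1)) / q x) atTop (𝓝 β) := by
  have hderiv : HasDerivAt (fun t : ℝ => (1 + t) ^ (-β)) (-β) 0 := by
    simpa using ((hasDerivAt_id (0 : ℝ)).const_add 1).rpow_const (p := -β) (Or.inl (by simp))
  have hinv : Tendsto (fun x : ℕ => (x : ℝ)⁻¹) atTop (𝓝[≠] 0) := by
    refine tendsto_nhdsWithin_iff.2 ⟨tendsto_inv_atTop_nhds_zero_nat, ?_⟩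
    filter_upwards [eventually_ne_atTop 0] with x hx
    simpa using hx
  have hlim := (tendsto_natCast_sub_add_one_div r).mul
    ((hasDerivAt_iff_tendsto_slope.1 hderiv).comp hinv).neg
  rw [neg_neg, one_mul] at hlim
  refine hlim.congr' ?_
  filter_upwards [h.eventually_eq, (tendsto_add_atTop_nat 1).eventually h.eventually_eq,
    eventually_gt_atTop 0] with x hx hx1 hx0
  have : (0 : ℝ) < x := by exact_mod_cast hx0
  have := h.b_pos
  have hfactor : ((x + 1 : ℕ) : ℝ) ^ (-β) = (x : ℝ) ^ (-β) * (1 + (x : ℝ)⁻¹) ^ (-β) := by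
    rw [← Real.mul_rpow (by positivity) (by positivity)]
    congr 1
    push_cast
    field_simp
  have : (x : ℝ) ^ (-β) ≠ 0 := by positivity
  rw [hx, hx1, hfactor]
  simp only [Function.comp, slope_def_field, add_zero, Real.one_rpow, sub_zero]
  field_simp
  ring

lemma tendsto_succ_div (h : IsPowerLawStrength b β q) :
    Tendsto (fun x : ℕ => q (x + 1) / q x) atTop (𝓝 1) := by
  have hlim := ((h.tendsto_decrement 0).mul (tendsto_one_div_natCast_sub_add_one 0)).const_sub 1
  rw [mul_zero, sub_zero] at hlim
  refine hlim.congr' ?_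
  filter_upwards [eventually_gt_atTop 0] with x hx
  have := (h.pos hx).ne'
  field_simp
  ring

lemma mean_le (h : IsPowerLawStrength b β q) (r x : ℕ) :
    ((x - r : ℕ) : ℝ) * q x ≤ b * (x : ℝ) ^ (1 - β) := by
  have hb := h.b_pos
  rcases x.eq_zero_or_pos with rfl | hx
  · rw [zero_tsub, Nat.cast_zero, zero_mul]
    positivity
  have hx : (0 : ℝ) < x := by exact_mod_cast hx
  calc ((x - r : ℕ) : ℝ) * q x ≤ x * (b * (x : ℝ) ^ (-β)) := by
        have := (h.mem_Icc x).1
        gcongr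
        · exact Nat.sub_le x r
        · exact (h.eq_min x).trans_le (min_le_right _ _)
    _ = b * (x : ℝ) ^ (1 - β) := by rw [sub_eq_add_neg, Real.rpow_add hx, Real.rpow_one]; ring

lemma eventually_le_mean (h : IsPowerLawStrength b β q) (r : ℕ) :
    ∀ᶠ x : ℕ in atTop, b * (x : ℝ) ^ (1 - β) - r ≤ ((x - r : ℕ) : ℝ) * q x := by
  filter_upwards [h.eventually_eq, eventually_gt_atTop r] with x hx hr
  have hx0 : (0 : ℝ) < x := by exact_mod_cast r.zero_le.trans_lt hr
  have hmean : b * (x : ℝ) ^ (1 - β) = x * q x := by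
    rw [hx, sub_eq_add_neg, Real.rpow_add hx0, Real.rpow_one]
    ring
  rw [hmean, Nat.cast_sub hr.le, sub_mul]
  exact sub_le_sub_left (mul_le_of_le_one_right r.cast_nonneg (h.mem_Icc x).2) _

end IsPowerLawStrength

/-! ### Layers whose mean degree is close to `s` -/

/-- The filter of pairs `(s, x)` with `s → ∞` and `b x^{1-β} ∼ s`: those layer sizes `x` whose
degrees are concentrated near `s`. -/
def meanFilter (b β : ℝ) : Filter (ℕ × ℕ) :=
  comap Prod.fst atTop ⊓ comap (fun z : ℕ × ℕ => b * (z.2 : ℝ) ^ (1 - β) / (z.1 : ℝ)) (𝓝 1)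

lemma tendsto_fst_meanFilter (b β : ℝ) : Tendsto Prod.fst (meanFilter b β) atTop :=
  tendsto_comap.mono_left inf_le_left

lemma tendsto_mul_rpow_div_meanFilter (b β : ℝ) :
    Tendsto (fun z : ℕ × ℕ => b * (z.2 : ℝ) ^ (1 - β) / (z.1 : ℝ)) (meanFilter b β) (𝓝 1) :=
  tendsto_comap.mono_left inf_le_right

lemma tendsto_snd_meanFilter {b β : ℝ} (hb : 0 < b) (hβ : β < 1) :
    Tendsto Prod.snd (meanFilter b β) atTop := by
  have hβ : 0 < 1 - β := sub_pos.2 hβ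
  have hmul : Tendsto (fun z : ℕ × ℕ => b * (z.2 : ℝ) ^ (1 - β)) (meanFilter b β) atTop := by
    refine ((tendsto_mul_rpow_div_meanFilter b β).pos_mul_atTop one_pos
      (tendsto_natCast_atTop_atTop.comp (tendsto_fst_meanFilter b β))).congr' ?_
    filter_upwards [(tendsto_fst_meanFilter b β).eventually_ne_atTop 0] with z hz
    exact div_mul_cancel₀ _ (Nat.cast_ne_zero.2 hz)
  have hpow : Tendsto (fun z : ℕ × ℕ => (z.2 : ℝ) ^ (1 - β)) (meanFilter b β) atTop :=
    (tendsto_const_mul_atTop_of_pos hb).1 hmul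
  refine tendsto_natCast_atTop_iff.1
    (((tendsto_rpow_atTop (inv_pos.2 hβ)).comp hpow).congr fun z => ?_)
  rw [Function.comp_apply, Real.rpow_rpow_inv (by positivity) hβ.ne']

lemma abs_sub_one_le_exp_sub_one {θ M : ℝ} (hθ : θ ∈ Set.Icc (Real.exp (-M)) (Real.exp M)) :
    |θ - 1| ≤ Real.exp M - 1 := by
  rw [abs_le]
  constructor <;> linarith [hθ.1, hθ.2, Real.add_one_le_exp M, Real.add_one_le_exp (-M)]

/-- The distribution function at `s` of the degree within a layer of size `x`, after removing `r`
of its nodes. -/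
def layerCDF (q : ℕ → ℝ) (r s x : ℕ) : ℝ := binCDF (x - r) (q x) s

namespace IsPowerLawStrength

variable {b β : ℝ} {q : ℕ → ℝ}

lemma tendsto_deviation_div (h : IsPowerLawStrength b β q) (r : ℕ) :
    Tendsto (fun z : ℕ × ℕ => ((z.1 : ℝ) - ((z.2 - r : ℕ) : ℝ) * q z.2) /
      (((z.2 - r : ℕ) : ℝ) + 1)) (meanFilter b β) (𝓝 0) := by
  obtain ⟨l, -, hq⟩ := h.exists_tendsto
  have hsnd := tendsto_snd_meanFilter h.b_pos h.β_lt_one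
  have hlim := (((hq.comp hsnd).mul
      (((tendsto_natCast_sub_add_one_div r).comp hsnd).inv₀ one_ne_zero)).mul
      ((tendsto_mul_rpow_div_meanFilter b β).inv₀ one_ne_zero)).sub
    ((hq.comp hsnd).mul (((tendsto_one_div_natCast_sub_add_one r).comp hsnd).const_sub 1))
  simp only [inv_one, mul_one, sub_zero, sub_self] at hlim
  refine hlim.congr' ?_
  filter_upwards [hsnd.eventually h.eventually_eq, hsnd.eventually_gt_atTop 0,
    (tendsto_fst_meanFilter b β).eventually_gt_atTop 0] with z hqz hx hs
  have hx : (0 : ℝ) < z.2 := by exact_mod_cast hx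
  have : (0 : ℝ) < z.1 := by exact_mod_cast hs
  have := h.b_pos
  have : (z.2 : ℝ) ^ (-β) ≠ 0 := by positivity
  have : ((z.2 - r : ℕ) : ℝ) + 1 ≠ 0 := by positivity
  simp only [Function.comp]
  rw [hqz, sub_eq_add_neg 1 β, Real.rpow_add hx, Real.rpow_one]
  field_simp
  ring

lemma tendsto_tilt (h : IsPowerLawStrength b β q) (r : ℕ) :
    Tendsto (fun z : ℕ × ℕ => (q z.2 - q (z.2 + 1)) *
      (|(z.1 : ℝ) - ((z.2 - r : ℕ) : ℝ) * q z.2| + ((z.2 - r : ℕ) : ℝ) * (q z.2 - q (z.2 + 1)))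
      / (q (z.2 + 1) * (1 - q z.2))) (meanFilter b β) (𝓝 0) := by
  obtain ⟨l, hl, hq⟩ := h.exists_tendsto
  have hsnd := tendsto_snd_meanFilter h.b_pos h.β_lt_one
  have hdiff := (hq.sub ((tendsto_add_atTop_iff_nat 1).2 hq)).comp hsnd
  have hsum := (h.tendsto_deviation_div r).abs.add
    ((((tendsto_one_div_natCast_sub_add_one r).comp hsnd).const_sub 1).mul hdiff)
  have hlim := ((((h.tendsto_decrement r).comp hsnd).mul
    ((h.tendsto_succ_div.comp hsnd).inv₀ one_ne_zero)).mul hsum).mul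
    (((hq.comp hsnd).const_sub 1).inv₀ (by linarith))
  simp only [sub_self, abs_zero, mul_zero, add_zero, zero_mul] at hlim
  refine hlim.congr' ?_
  filter_upwards [hsnd.eventually h.eventually_lt_one, hsnd.eventually_gt_atTop 0] with z hlt hx
  have hqz := h.pos hx
  have hqz' := h.pos z.2.succ_pos
  have : 0 < 1 - q z.2 := sub_pos.2 hlt
  have hn : (0 : ℝ) < ((z.2 - r : ℕ) : ℝ) + 1 := by positivity
  simp only [Function.comp]
  rw [abs_div, abs_of_pos hn]
  field_simp
  ring

open Asymptotics in
lemma layerCDF_sub_layerCDF_succ_isEquivalent (h : IsPowerLawStrength b β q) (r : ℕ) :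
    (fun z : ℕ × ℕ => layerCDF q r z.1 z.2 - layerCDF q r z.1 (z.2 + 1)) ~[meanFilter b β]
      fun z => (1 - β) * (q z.2 * binP (z.2 - r) (q z.2) z.1) := by
  have hsnd := tendsto_snd_meanFilter h.b_pos h.β_lt_one
  have htilt := (Real.continuous_exp.tendsto 0).comp (h.tendsto_tilt r)
  have herr := (((h.tendsto_decrement r).comp hsnd).sub_const β).abs.add
    (((h.tendsto_decrement r).comp hsnd).mul (htilt.sub_const 1))
  simp only [sub_self, abs_zero, Real.exp_zero, mul_zero, add_zero] at herr
  have hsmall := ((isLittleO_one_iff ℝ).2 herr).mul_isBigO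
    (isBigO_refl (fun z : ℕ × ℕ => q z.2 * binP (z.2 - r) (q z.2) z.1) _)
  simp only [one_mul] at hsmall
  refine IsLittleO.const_mul_right h.one_sub_pos.ne' ((IsBigO.of_bound' ?_).trans_isLittleO hsmall)
  filter_upwards [hsnd.eventually h.eventually_lt_one, hsnd.eventually_ge_atTop (r + 1)]
    with z hlt hr
  have hq := h.pos (x := z.2) (by omega)
  obtain ⟨θ, hθ, hdiff⟩ := exists_binCDF_sub_binCDF_succ (z.2 - r) z.1 (h.succ_le (by omega))
    (h.pos z.2.succ_pos) hlt
  have hθ1 := abs_sub_one_le_exp_sub_one hθ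
  have hstep : 0 ≤ (((z.2 - r : ℕ) : ℝ) + 1) * (q z.2 - q (z.2 + 1)) / q z.2 := by
    have := sub_nonneg.2 (h.succ_le (x := z.2) (by omega))
    positivity
  simp only [Pi.sub_apply, layerCDF, Nat.sub_add_comm (show r ≤ z.2 by omega), hdiff,
    Function.comp]
  set B := binP (z.2 - r) (q z.2) z.1
  set d := (((z.2 - r : ℕ) : ℝ) + 1) * (q z.2 - q (z.2 + 1)) / q z.2
  rw [show q z.2 * B * (1 - d * θ) - (1 - β) * (q z.2 * B) =
    -((d - β) + d * (θ - 1)) * (q z.2 * B) by ring, norm_mul, norm_neg,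
    norm_mul _ (q z.2 * B)]
  refine mul_le_mul_of_nonneg_right ?_ (norm_nonneg _)
  refine (abs_add_le _ _).trans (le_trans ?_ (le_abs_self _))
  rw [abs_mul, abs_of_nonneg hstep]
  gcongr

lemma tendsto_weight_mul_rpow_div (h : IsPowerLawStrength b β q) {w : ℕ → ℝ} {A γ : ℝ}
    (hw : Tendsto (fun x : ℕ => w x * (x : ℝ) ^ γ) atTop (𝓝 A)) :
    Tendsto (fun z : ℕ × ℕ => w z.2 * (z.1 : ℝ) ^ ((γ - β) / (1 - β)) / q z.2) (meanFilter b β)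
      (𝓝 (A * b ^ ((γ - β) / (1 - β) - 1))) := by
  have hsnd := tendsto_snd_meanFilter h.b_pos h.β_lt_one
  set E := (γ - β) / (1 - β) with hE
  have hEmul : (1 - β) * -E = β - γ := by
    rw [mul_neg, hE, mul_div_cancel₀ _ h.one_sub_pos.ne', neg_sub]
  have hlim := ((hw.comp hsnd).mul_const (b ^ (E - 1))).mul
    ((tendsto_mul_rpow_div_meanFilter b β).rpow_const (p := -E) (Or.inl one_ne_zero))
  rw [Real.one_rpow, mul_one] at hlim
  refine hlim.congr' ?_
  filter_upwards [hsnd.eventually h.eventually_eq, hsnd.eventually_gt_atTop 0,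
    (tendsto_fst_meanFilter b β).eventually_gt_atTop 0] with z hqz hx hs
  have hx : (0 : ℝ) < z.2 := by exact_mod_cast hx
  have hs : (0 : ℝ) < z.1 := by exact_mod_cast hs
  have hb := h.b_pos
  simp only [Function.comp]
  rw [hqz, Real.div_rpow (by positivity) hs.le, Real.mul_rpow hb.le (by positivity),
    ← Real.rpow_mul hx.le, hEmul, Real.rpow_neg hb.le, Real.rpow_neg hs.le, Real.rpow_sub hx,
    Real.rpow_neg hx.le, Real.rpow_sub hb, Real.rpow_one]
  field_simp

open Asymptotics in
lemma weight_mul_binP_mul_rpow_sub_isLittleO (h : IsPowerLawStrength b β q) {w : ℕ → ℝ} {A γ : ℝ}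
    (hw : Tendsto (fun x : ℕ => w x * (x : ℝ) ^ γ) atTop (𝓝 A)) (r : ℕ) :
    (fun z : ℕ × ℕ => w z.2 * binP (z.2 - r) (q z.2) z.1 * (z.1 : ℝ) ^ ((γ - β) / (1 - β)) -
        A * b ^ ((γ - β) / (1 - β) - 1) / (1 - β) *
          (layerCDF q r z.1 z.2 - layerCDF q r z.1 (z.2 + 1))) =o[meanFilter b β]
      fun z => layerCDF q r z.1 z.2 - layerCDF q r z.1 (z.2 + 1) := by
  have hne := h.one_sub_pos.ne'
  have hequiv := h.layerCDF_sub_layerCDF_succ_isEquivalent r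
  have hweight := (((isLittleO_one_iff ℝ).2 (tendsto_sub_nhds_zero_iff.2
    (h.tendsto_weight_mul_rpow_div hw))).mul_isBigO
    (isBigO_refl (fun z : ℕ × ℕ => (1 - β) * (q z.2 * binP (z.2 - r) (q z.2) z.1)) _)
    |>.const_mul_left (1 - β)⁻¹)
  simp only [one_mul] at hweight
  set L := A * b ^ ((γ - β) / (1 - β) - 1)
  refine ((hweight.sub (hequiv.isLittleO.const_mul_left (L / (1 - β)))).congr' ?_ .rfl).trans_isBigO
    hequiv.isBigO_symm
  filter_upwards [(tendsto_snd_meanFilter h.b_pos h.β_lt_one).eventually_gt_atTop 0] with z hx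
  have := (h.pos hx).ne'
  simp only [Pi.sub_apply]
  field_simp
  ring

end IsPowerLawStrength

/-- The least layer size `x` with `c s ≤ b x^{1-β}`. -/
def window (b β c : ℝ) (s : ℕ) : ℕ := ⌈(c * s / b) ^ (1 - β)⁻¹⌉₊

section Window

variable {b β c : ℝ}

lemma lt_window_iff (hb : 0 < b) (hβ : β < 1) (hc : 0 ≤ c) {s x : ℕ} :
    x < window b β c s ↔ b * (x : ℝ) ^ (1 - β) < c * s := by
  rw [window, Nat.lt_ceil, Real.lt_rpow_inv_iff_of_pos x.cast_nonneg (by positivity)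
    (sub_pos.2 hβ), lt_div_iff₀' hb]

lemma window_le_iff (hb : 0 < b) (hβ : β < 1) (hc : 0 ≤ c) {s x : ℕ} :
    window b β c s ≤ x ↔ c * s ≤ b * (x : ℝ) ^ (1 - β) := by
  rw [← not_lt, lt_window_iff hb hβ hc, not_lt]

lemma window_mono {c' : ℝ} (hb : 0 < b) (hβ : β < 1) (hc : 0 ≤ c) (h : c ≤ c') (s : ℕ) :
    window b β c s ≤ window b β c' s := by
  rw [window_le_iff hb hβ hc]
  exact (mul_le_mul_of_nonneg_right h s.cast_nonneg).trans
    ((window_le_iff hb hβ (hc.trans h)).1 le_rfl)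

lemma mul_window_rpow_le (hb : 0 < b) (hβ0 : 0 ≤ β) (hβ : β < 1) (hc : 0 ≤ c) (s : ℕ) :
    b * (window b β c s : ℝ) ^ (1 - β) ≤ c * s + b := by
  rcases h : window b β c s with _ | x
  · rw [Nat.cast_zero, Real.zero_rpow (sub_pos.2 hβ).ne', mul_zero]
    positivity
  · have hx : b * (x : ℝ) ^ (1 - β) < c * s := (lt_window_iff hb hβ hc).1 (by omega)
    have hadd : ((x + 1 : ℕ) : ℝ) ^ (1 - β) ≤ (x : ℝ) ^ (1 - β) + 1 := by
      simpa using Real.rpow_add_le_add_rpow x.cast_nonneg zero_le_one (sub_pos.2 hβ).le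
        (by linarith : 1 - β ≤ 1)
    nlinarith

lemma tendsto_window_atTop (hb : 0 < b) (hβ : β < 1) (hc : 0 < c) :
    Tendsto (window b β c) atTop atTop :=
  tendsto_nat_ceil_atTop.comp <| (tendsto_rpow_atTop (inv_pos.2 (sub_pos.2 hβ))).comp <|
    (tendsto_natCast_atTop_atTop.const_mul_atTop hc).atTop_div_const hb

lemma exists_forall_mem_Ico_window {P : ℕ × ℕ → Prop} (hb : 0 < b) (hβ : β < 1)
    (hP : ∀ᶠ z in meanFilter b β, P z) :
    ∃ e ∈ Set.Ioo (0 : ℝ) 1, ∀ᶠ s in atTop,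
      ∀ x ∈ Finset.Ico (window b β (1 - e) s) (window b β (1 + e) s), P (s, x) := by
  obtain ⟨⟨S, ε⟩, ⟨-, hε⟩, hmem⟩ := ((atTop_basis.comap Prod.fst).inf
    (Metric.nhds_basis_closedBall.comap _)).eventually_iff.1 hP
  refine ⟨min ε (1 / 2), ⟨by positivity, by norm_num⟩, ?_⟩
  filter_upwards [eventually_ge_atTop S, eventually_gt_atTop 0] with s hS hs x hx
  have hs : (0 : ℝ) < s := by exact_mod_cast hs
  have he : 0 ≤ 1 - min ε (1 / 2) := by linarith [min_le_right ε (1 / 2)]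
  rw [Finset.mem_Ico, window_le_iff hb hβ he, lt_window_iff hb hβ (by positivity)] at hx
  refine hmem ⟨hS, ?_⟩
  rw [Set.mem_preimage, Metric.mem_closedBall, Real.dist_eq, abs_le, neg_le_sub_iff_le_add,
    sub_le_iff_le_add, ← sub_le_iff_le_add, le_div_iff₀ hs, div_le_iff₀ hs]
  constructor <;> nlinarith [min_le_left ε (1 / 2)]

end Window

namespace IsPowerLawStrength

variable {b β : ℝ} {q : ℕ → ℝ}

lemma eventually_le_mean_of_window_le (h : IsPowerLawStrength b β q) (r : ℕ) {c c' : ℝ}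
    (hc : 0 < c) (hc' : c' < c) :
    ∀ᶠ s : ℕ in atTop, ∀ x, window b β c s ≤ x → c' * s ≤ ((x - r : ℕ) : ℝ) * q x := by
  have hlarge : ∀ᶠ s : ℕ in atTop, (r : ℝ) ≤ (c - c') * s :=
    (tendsto_natCast_atTop_atTop.const_mul_atTop (sub_pos.2 hc')).eventually_ge_atTop _
  filter_upwards [hlarge, (tendsto_window_atTop h.b_pos h.β_lt_one hc).eventually
    (eventually_forall_ge_atTop.2 (h.eventually_le_mean r))] with s hs hmean x hx
  linarith [hmean x hx, (window_le_iff h.b_pos h.β_lt_one hc.le).1 hx]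

lemma exists_binP_le_exp_of_notMem_Ico_window (h : IsPowerLawStrength b β q) (r : ℕ) {e : ℝ}
    (he : e ∈ Set.Ioo (0 : ℝ) 1) :
    ∃ c > 0, ∀ᶠ s : ℕ in atTop,
      ∀ x ∉ Finset.Ico (window b β (1 - e) s) (window b β (1 + e) s),
        binP (x - r) (q x) s ≤ Real.exp (-(c * s)) := by
  have he0 := he.1
  refine ⟨(e / 2) ^ 2 / (2 * (2 + e / 2)), by positivity, ?_⟩
  filter_upwards [eventually_gt_atTop 0, h.eventually_le_mean_of_window_le r
    (by positivity : 0 < 1 + e) (by linarith : 1 + e / 2 < 1 + e)] with s hs habove x hx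
  have hs : (0 : ℝ) < s := by exact_mod_cast hs
  have hdev : e / 2 * s ≤ |(s : ℝ) - ((x - r : ℕ) : ℝ) * q x| := by
    rw [Finset.mem_Ico, not_and_or, not_le, not_lt,
      lt_window_iff h.b_pos h.β_lt_one (sub_pos.2 he.2).le] at hx
    rcases hx with hx | hx
    · refine le_trans ?_ (le_abs_self _)
      nlinarith [h.mean_le r x]
    · refine le_trans ?_ (neg_le_abs _)
      linarith [habove x hx]
  refine (binP_le_exp_of_le_abs_sub (h.mem_Icc x) (by positivity) hdev).trans_eq ?_
  congr 2
  field_simp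

lemma tendsto_layerCDF_window_sub (h : IsPowerLawStrength b β q) (r : ℕ) {e : ℝ}
    (he : e ∈ Set.Ioo (0 : ℝ) 1) :
    Tendsto (fun s => layerCDF q r s (window b β (1 - e) s) -
      layerCDF q r s (window b β (1 + e) s)) atTop (𝓝 1) := by
  have he0 := he.1
  have he1 : 0 < 1 - e := sub_pos.2 he.2
  have hbelow : ∀ᶠ s : ℕ in atTop, b ≤ e / 2 * s :=
    (tendsto_natCast_atTop_atTop.const_mul_atTop (half_pos he0)).eventually_ge_atTop _
  have hone : Tendsto (fun s => layerCDF q r s (window b β (1 - e) s)) atTop (𝓝 1) := by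
    refine tendsto_binCDF_one (c := 1 - e / 2) (fun s => h.mem_Icc _) (by linarith) ?_
    filter_upwards [hbelow] with s hs
    linarith [h.mean_le r (window b β (1 - e) s),
      mul_window_rpow_le h.b_pos h.β_nonneg h.β_lt_one he1.le s]
  have hzero : Tendsto (fun s => layerCDF q r s (window b β (1 + e) s)) atTop (𝓝 0) := by
    refine tendsto_binCDF_zero (c := 1 + e / 2) (fun s => h.mem_Icc _) (by linarith) ?_
    filter_upwards [h.eventually_le_mean_of_window_le r (by positivity : 0 < 1 + e)
      (by linarith : 1 + e / 2 < 1 + e)] with s hs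
    exact hs _ le_rfl
  simpa using hone.sub hzero

lemma eventually_layerCDF_sub_layerCDF_succ_nonneg (h : IsPowerLawStrength b β q) (r : ℕ) :
    ∀ᶠ z in meanFilter b β, 0 ≤ layerCDF q r z.1 z.2 - layerCDF q r z.1 (z.2 + 1) := by
  obtain ⟨φ, hφ, hdiff⟩ := (h.layerCDF_sub_layerCDF_succ_isEquivalent r).exists_eq_mul
  filter_upwards [hdiff, hφ.eventually_const_lt one_pos] with z hz hφz
  rw [hz]
  exact mul_nonneg hφz.le (mul_nonneg h.one_sub_pos.le
    (mul_nonneg (h.mem_Icc _).1 (binP_nonneg _ (h.mem_Icc _) _)))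

end IsPowerLawStrength

/-! ### Mixtures of binomial laws -/

lemma hasSum_tsum_swap_of_nonneg {f : ℕ → ℕ → ℝ} (hf : ∀ j s, 0 ≤ f j s) {g : ℕ → ℝ} {c : ℝ}
    (hfg : ∀ j, HasSum (f j) (g j)) (hg : HasSum g c) : HasSum (fun s => ∑' j, f j s) c := by
  have hsum : Summable fun z : ℕ × ℕ => f z.1 z.2 :=
    (summable_prod_of_nonneg fun z => hf z.1 z.2).2
      ⟨fun j => (hfg j).summable, by simpa only [(hfg _).tsum_eq] using hg.summable⟩
  have hswap := (Equiv.prodComm ℕ ℕ).hasSum_iff.2 hsum.hasSum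
  rw [(hsum.hasSum.prod_fiberwise hfg).unique hg] at hswap
  exact hswap.prod_fiberwise fun s => (hswap.summable.prod_factor s).hasSum

lemma summable_mul_of_mem_Icc {w B : ℕ → ℝ} (hw0 : ∀ x, 0 ≤ w x) (hw : Summable w)
    (hB : ∀ x, B x ∈ Set.Icc (0 : ℝ) 1) : Summable fun x => w x * B x :=
  hw.of_nonneg_of_le (fun x => mul_nonneg (hw0 x) (hB x).1)
    fun x => mul_le_of_le_one_right (hw0 x) (hB x).2

/-- The mixture of the binomial laws `Bin(N x, y x)` with weights `w x`. -/
def mixBin (w : ℕ → ℝ) (N : ℕ → ℕ) (y : ℕ → ℝ) (s : ℕ) : ℝ :=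
  ∑' x, w x * binP (N x) (y x) s

/-- The mixture with weights `w x` of the laws of two independent `Bin(N x, y x)` variables. -/
def mixBin₂ (w : ℕ → ℝ) (N : ℕ → ℕ) (y : ℕ → ℝ) (s t : ℕ) : ℝ :=
  ∑' x, w x * (binP (N x) (y x) s * binP (N x) (y x) t)

section Mixture

variable {w : ℕ → ℝ} {N : ℕ → ℕ} {y : ℕ → ℝ}

lemma binP_mem_Icc (hy : ∀ x, y x ∈ Set.Icc (0 : ℝ) 1) (x s : ℕ) :
    binP (N x) (y x) s ∈ Set.Icc (0 : ℝ) 1 :=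
  ⟨binP_nonneg _ (hy x) s, binP_le_one _ (hy x) s⟩

lemma mixBin_nonneg (hw0 : ∀ x, 0 ≤ w x) (hy : ∀ x, y x ∈ Set.Icc (0 : ℝ) 1) (s : ℕ) :
    0 ≤ mixBin w N y s :=
  tsum_nonneg fun x => mul_nonneg (hw0 x) (binP_nonneg _ (hy x) s)

lemma hasSum_mixBin (hw0 : ∀ x, 0 ≤ w x) {W : ℝ} (hw : HasSum w W)
    (hy : ∀ x, y x ∈ Set.Icc (0 : ℝ) 1) : HasSum (mixBin w N y) W :=
  hasSum_tsum_swap_of_nonneg (fun x s => mul_nonneg (hw0 x) (binP_nonneg _ (hy x) s))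
    (fun x => by simpa using (hasSum_binP (N x) (y x)).mul_left (w x)) hw

end Mixture

namespace IsPowerLawStrength

variable {b β : ℝ} {q w : ℕ → ℝ}

lemma tendsto_mixBin_sub_sum_window_mul_rpow (h : IsPowerLawStrength b β q)
    (hw0 : ∀ x, 0 ≤ w x) (hw : Summable w) (r : ℕ) (E : ℝ) {e : ℝ} (he : e ∈ Set.Ioo (0 : ℝ) 1) :
    Tendsto (fun s : ℕ => (mixBin w (· - r) q s -
      ∑ x ∈ Finset.Ico (window b β (1 - e) s) (window b β (1 + e) s),
        w x * binP (x - r) (q x) s) * (s : ℝ) ^ E) atTop (𝓝 0) := by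
  obtain ⟨c, hc, hoff⟩ := h.exists_binP_le_exp_of_notMem_Ico_window r he
  have hlim := ((tendsto_rpow_mul_exp_neg_mul_atTop_nhds_zero E c hc).comp
    tendsto_natCast_atTop_atTop).const_mul (∑' x, w x)
  rw [mul_zero] at hlim
  have hmem := binP_mem_Icc (N := (· - r)) h.mem_Icc
  have hterm : ∀ s x, 0 ≤ w x * binP (x - r) (q x) s := fun s x => mul_nonneg (hw0 x) (hmem x s).1
  refine squeeze_zero_norm' ?_ hlim
  filter_upwards [hoff] with s hs
  set I := Finset.Ico (window b β (1 - e) s) (window b β (1 + e) s)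
  have hsum := summable_mul_of_mem_Icc hw0 hw (hmem · s)
  have hsplit : mixBin w (· - r) q s - ∑ x ∈ I, w x * binP (x - r) (q x) s =
      ∑' x : ↥((I : Set ℕ)ᶜ), w x * binP (x - r) (q x) s :=
    sub_eq_of_eq_add' (hsum.sum_add_tsum_compl (s := I)).symm
  have hle : ∑' x : ↥((I : Set ℕ)ᶜ), w x * binP (x - r) (q x) s ≤
      (∑' x, w x) * Real.exp (-(c * s)) :=
    calc ∑' x : ↥((I : Set ℕ)ᶜ), w x * binP (x - r) (q x) s
        ≤ ∑' x : ↥((I : Set ℕ)ᶜ), w x * Real.exp (-(c * s)) :=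
          (hsum.subtype _).tsum_le_tsum
            (fun x => mul_le_mul_of_nonneg_left (hs x fun hx => x.2 (Finset.mem_coe.2 hx)) (hw0 x))
            ((hw.mul_right _).subtype _)
      _ ≤ ∑' x, w x * Real.exp (-(c * s)) := (hw.mul_right _).tsum_subtype_le _ _
            fun x => mul_nonneg (hw0 x) (Real.exp_pos _).le
      _ = _ := tsum_mul_right
  rw [hsplit, Real.norm_of_nonneg (mul_nonneg (tsum_nonneg fun _ => hterm s _) (by positivity))]
  calc _ ≤ (∑' x, w x) * Real.exp (-(c * s)) * (s : ℝ) ^ E := by gcongr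
    _ = _ := by simp only [Function.comp, neg_mul]; ring

lemma exists_abs_sum_window_sub_le (h : IsPowerLawStrength b β q) {A γ : ℝ}
    (hw : Tendsto (fun x : ℕ => w x * (x : ℝ) ^ γ) atTop (𝓝 A)) (r : ℕ) {ε : ℝ} (hε : 0 < ε) :
    ∃ e ∈ Set.Ioo (0 : ℝ) 1, ∀ᶠ s : ℕ in atTop,
      |(∑ x ∈ Finset.Ico (window b β (1 - e) s) (window b β (1 + e) s),
          w x * binP (x - r) (q x) s) * (s : ℝ) ^ ((γ - β) / (1 - β)) -
        A * b ^ ((γ - β) / (1 - β) - 1) / (1 - β) *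
          (layerCDF q r s (window b β (1 - e) s) - layerCDF q r s (window b β (1 + e) s))| ≤
      ε * (layerCDF q r s (window b β (1 - e) s) - layerCDF q r s (window b β (1 + e) s)) := by
  obtain ⟨e, he, hwin⟩ := exists_forall_mem_Ico_window h.b_pos h.β_lt_one
    (((h.weight_mul_binP_mul_rpow_sub_isLittleO hw r).def hε).and
      (h.eventually_layerCDF_sub_layerCDF_succ_nonneg r))
  refine ⟨e, he, ?_⟩
  filter_upwards [hwin] with s hs
  have htele : ∑ x ∈ Finset.Ico (window b β (1 - e) s) (window b β (1 + e) s),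
      (layerCDF q r s x - layerCDF q r s (x + 1)) =
        layerCDF q r s (window b β (1 - e) s) - layerCDF q r s (window b β (1 + e) s) := by
    rw [← neg_inj, ← Finset.sum_neg_distrib]
    simp only [neg_sub]
    exact Finset.sum_Ico_sub _
      (window_mono h.b_pos h.β_lt_one (sub_pos.2 he.2).le (by linarith [he.1]) s)
  rw [← htele, Finset.sum_mul, Finset.mul_sum, Finset.mul_sum, ← Finset.sum_sub_distrib]
  refine (Finset.abs_sum_le_sum_abs _ _).trans (Finset.sum_le_sum fun x hx => ?_)
  obtain ⟨hle, hnn⟩ := hs x hx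
  rwa [Real.norm_eq_abs, Real.norm_of_nonneg hnn] at hle

lemma tendsto_mixBin_mul_rpow (h : IsPowerLawStrength b β q) (hw0 : ∀ x, 0 ≤ w x)
    (hws : Summable w) {A γ : ℝ} (hw : Tendsto (fun x : ℕ => w x * (x : ℝ) ^ γ) atTop (𝓝 A))
    (r : ℕ) :
    Tendsto (fun s : ℕ => mixBin w (· - r) q s * (s : ℝ) ^ ((γ - β) / (1 - β))) atTop
      (𝓝 (A * b ^ ((γ - β) / (1 - β) - 1) / (1 - β))) := by
  set E := (γ - β) / (1 - β)
  set C := A * b ^ (E - 1) / (1 - β)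
  refine Metric.tendsto_nhds.2 fun ε hε => ?_
  obtain ⟨e, he, hsum⟩ := h.exists_abs_sum_window_sub_le hw r (half_pos hε)
  have htele := h.tendsto_layerCDF_window_sub r he
  have hbound := ((h.tendsto_mixBin_sub_sum_window_mul_rpow hw0 hws r E he).abs.add
    (htele.const_mul (ε / 2))).add ((htele.sub_const 1).const_mul C).abs
  simp only [abs_zero, zero_add, mul_one, sub_self, mul_zero, add_zero] at hbound
  filter_upwards [hsum, hbound.eventually_lt_const (half_lt_self hε)] with s hs hlt
  set S := ∑ x ∈ Finset.Ico (window b β (1 - e) s) (window b β (1 + e) s),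
    w x * binP (x - r) (q x) s
  set D := layerCDF q r s (window b β (1 - e) s) - layerCDF q r s (window b β (1 + e) s)
  refine lt_of_le_of_lt ?_ hlt
  calc |mixBin w (· - r) q s * (s : ℝ) ^ E - C|
      = |(mixBin w (· - r) q s - S) * (s : ℝ) ^ E + (S * (s : ℝ) ^ E - C * D) + C * (D - 1)| := by
        congr 1; ring
    _ ≤ _ := (abs_add_three _ _ _).trans (by gcongr)

end IsPowerLawStrength

/-! ### Near-diagonal concentration -/

/-- Bound on the probability that a binomial variable equals an integer `s ≤ M` at distance at
least `d / 2` from its mean. -/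
def devBound (M d : ℝ) : ℝ := Real.exp (-(d ^ 2 / (16 * M + 4 * d)))

/-- Chebyshev bound on the probability that a binomial variable with mean at most `M + d / 2`
deviates from its mean by at least `d / 2`. -/
def varRatio (M d : ℝ) : ℝ := 4 * (M + d / 2) / d ^ 2

lemma devBound_pos (M d : ℝ) : 0 < devBound M d := Real.exp_pos _

lemma varRatio_nonneg {M d : ℝ} (hM : 0 ≤ M) (hd : 0 ≤ d) : 0 ≤ varRatio M d := by
  unfold varRatio
  positivity

lemma binP_le_devBound {n s : ℕ} {y : ℝ} (hy : y ∈ Set.Icc (0 : ℝ) 1) {M d : ℝ} (hd : 0 < d)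
    (hs : (s : ℝ) ≤ M) (h : d / 2 ≤ |(s : ℝ) - n * y|) : binP n y s ≤ devBound M d := by
  refine (binP_le_exp_of_le_abs_sub hy (half_pos hd) h).trans (Real.exp_le_exp.2 (neg_le_neg ?_))
  calc d ^ 2 / (16 * M + 4 * d) ≤ d ^ 2 / (16 * s + 4 * d) := by gcongr
    _ = (d / 2) ^ 2 / (2 * (2 * s + d / 2)) := by field_simp; ring

lemma one_sub_varRatio_le_sum_binP {n s : ℕ} {y : ℝ} (hy : y ∈ Set.Icc (0 : ℝ) 1) {M d : ℝ}
    (hd : 0 < d) (hs : (s : ℝ) ≤ M) (h : |(s : ℝ) - n * y| < d / 2) {A : Finset ℕ}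
    (hA : ∀ t : ℕ, |(t : ℝ) - s| ≤ d → t ∈ A) : 1 - varRatio M d ≤ ∑ t ∈ A, binP n y t := by
  have hmean : n * y ≤ M + d / 2 := by linarith [(abs_lt.1 h).1]
  calc 1 - varRatio M d ≤ 1 - n * y / (d / 2) ^ 2 := by
        rw [varRatio, show 4 * (M + d / 2) / d ^ 2 = (M + d / 2) / (d / 2) ^ 2 by field_simp; ring]
        gcongr
    _ ≤ ∑ t ∈ A, binP n y t := one_sub_div_sq_le_sum_binP hy (half_pos hd) fun t ht => hA t <| by
        rw [abs_sub_comm] at h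
        linarith [abs_sub_le (t : ℝ) (n * y) s]

/-- A mass function `F` on `ℕ × ℕ` with first marginal (at most) `h` which charges the complement
of the diagonal as little as the law of two independent binomial variables with common mean. -/
structure ConcentratesNearDiagonal (F : ℕ → ℕ → ℝ) (h : ℕ → ℝ) : Prop where
  nonneg : ∀ s t, 0 ≤ F s t
  sum_le : ∀ s (A : Finset ℕ), ∑ t ∈ A, F s t ≤ h s
  le_devBound : ∀ {s t : ℕ} {M d : ℝ}, 0 < d → (s : ℝ) ≤ M → (t : ℝ) ≤ M → d ≤ |(s : ℝ) - t| →
    F s t ≤ devBound M d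
  le_sum : ∀ {s : ℕ} {M d : ℝ}, 0 < d → (s : ℝ) ≤ M → ∀ {A : Finset ℕ},
    (∀ t : ℕ, |(t : ℝ) - s| ≤ d → t ∈ A) →
      (1 - varRatio M d) * h s - devBound M d ≤ ∑ t ∈ A, F s t

section Mixture

variable {w : ℕ → ℝ} {N : ℕ → ℕ} {y : ℕ → ℝ}

lemma sum_mixBin₂ (hw0 : ∀ x, 0 ≤ w x) (hw : Summable w) (hy : ∀ x, y x ∈ Set.Icc (0 : ℝ) 1)
    (s : ℕ) (A : Finset ℕ) :
    ∑ t ∈ A, mixBin₂ w N y s t =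
      ∑' x, w x * (binP (N x) (y x) s * ∑ t ∈ A, binP (N x) (y x) t) := by
  unfold mixBin₂
  rw [← Summable.tsum_finsetSum fun t _ => summable_mul_of_mem_Icc hw0 hw fun x =>
    unitInterval.mul_mem (binP_mem_Icc hy x s) (binP_mem_Icc hy x t)]
  exact tsum_congr fun x => by rw [Finset.mul_sum, Finset.mul_sum]

lemma binP_mul_sum_mem_Icc (hy : ∀ x, y x ∈ Set.Icc (0 : ℝ) 1) (s : ℕ) (A : Finset ℕ) (x : ℕ) :
    binP (N x) (y x) s * ∑ t ∈ A, binP (N x) (y x) t ∈ Set.Icc (0 : ℝ) 1 :=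
  unitInterval.mul_mem (binP_mem_Icc hy x s)
    ⟨Finset.sum_nonneg fun t _ => binP_nonneg _ (hy x) t, sum_binP_le_one _ (hy x) A⟩

lemma mixBin₂_le_devBound (hw0 : ∀ x, 0 ≤ w x) (hw : HasSum w 1)
    (hy : ∀ x, y x ∈ Set.Icc (0 : ℝ) 1) {s t : ℕ} {M d : ℝ} (hd : 0 < d) (hs : (s : ℝ) ≤ M)
    (ht : (t : ℝ) ≤ M) (h : d ≤ |(s : ℝ) - t|) : mixBin₂ w N y s t ≤ devBound M d := by
  have hconst : HasSum (fun x => w x * devBound M d) (devBound M d) := by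
    simpa using hw.mul_right (devBound M d)
  rw [← hconst.tsum_eq]
  refine (summable_mul_of_mem_Icc hw0 hw.summable fun x => unitInterval.mul_mem
    (binP_mem_Icc hy x s) (binP_mem_Icc hy x t)).tsum_le_tsum (fun x => ?_) hconst.summable
  refine mul_le_mul_of_nonneg_left ?_ (hw0 x)
  obtain ⟨hs0, hs1⟩ := binP_mem_Icc (N := N) hy x s
  obtain ⟨ht0, ht1⟩ := binP_mem_Icc (N := N) hy x t
  rcases le_or_gt (d / 2) |(s : ℝ) - N x * y x| with hfar | hnear
  · exact (mul_le_of_le_one_right hs0 ht1).trans (binP_le_devBound (hy x) hd hs hfar)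
  · refine (mul_le_of_le_one_left ht0 hs1).trans (binP_le_devBound (hy x) hd ht ?_)
    rw [abs_sub_comm (t : ℝ)]
    linarith [abs_sub_le (s : ℝ) (N x * y x) t]

lemma le_sum_mixBin₂ (hw0 : ∀ x, 0 ≤ w x) (hw : HasSum w 1)
    (hy : ∀ x, y x ∈ Set.Icc (0 : ℝ) 1) {s : ℕ} {M d : ℝ} (hd : 0 < d) (hs : (s : ℝ) ≤ M)
    {A : Finset ℕ} (hA : ∀ t : ℕ, |(t : ℝ) - s| ≤ d → t ∈ A) :
    (1 - varRatio M d) * mixBin w N y s - devBound M d ≤ ∑ t ∈ A, mixBin₂ w N y s t := by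
  have hconst : HasSum (fun x => w x * devBound M d) (devBound M d) := by
    simpa using hw.mul_right (devBound M d)
  have hmix : Summable fun x => w x * binP (N x) (y x) s :=
    summable_mul_of_mem_Icc hw0 hw.summable (binP_mem_Icc hy · s)
  rw [sum_mixBin₂ hw0 hw.summable hy, mixBin, ← tsum_mul_left, ← hconst.tsum_eq,
    ← (hmix.mul_left _).tsum_sub hconst.summable]
  refine ((hmix.mul_left _).sub hconst.summable).tsum_le_tsum (fun x => ?_)
    (summable_mul_of_mem_Icc hw0 hw.summable (binP_mul_sum_mem_Icc hy s A))
  obtain ⟨hs0, -⟩ := binP_mem_Icc (N := N) hy x s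
  suffices (1 - varRatio M d) * binP (N x) (y x) s - devBound M d ≤
      binP (N x) (y x) s * ∑ t ∈ A, binP (N x) (y x) t by
    linarith [mul_le_mul_of_nonneg_left this (hw0 x)]
  have he := devBound_pos M d
  rcases le_or_gt (d / 2) |(s : ℝ) - N x * y x| with hfar | hnear
  · have hρ := mul_nonneg (varRatio_nonneg (s.cast_nonneg.trans hs) hd.le) hs0
    linarith [binP_le_devBound (hy x) hd hs hfar, (binP_mul_sum_mem_Icc (N := N) hy s A x).1]
  · linarith [mul_le_mul_of_nonneg_left
      (one_sub_varRatio_le_sum_binP (hy x) hd hs hnear hA) hs0]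

lemma concentratesNearDiagonal_mixBin₂ (hw0 : ∀ x, 0 ≤ w x) (hw : HasSum w 1)
    (hy : ∀ x, y x ∈ Set.Icc (0 : ℝ) 1) :
    ConcentratesNearDiagonal (mixBin₂ w N y) (mixBin w N y) where
  nonneg s t := tsum_nonneg fun x => mul_nonneg (hw0 x)
    (mul_nonneg (binP_nonneg _ (hy x) s) (binP_nonneg _ (hy x) t))
  sum_le s A := by
    rw [sum_mixBin₂ hw0 hw.summable hy]
    refine (summable_mul_of_mem_Icc hw0 hw.summable (binP_mul_sum_mem_Icc hy s A)).tsum_le_tsum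
      (fun x => mul_le_mul_of_nonneg_left ?_ (hw0 x))
      (summable_mul_of_mem_Icc hw0 hw.summable (binP_mem_Icc hy · s))
    exact mul_le_of_le_one_right (binP_nonneg _ (hy x) s) (sum_binP_le_one _ (hy x) A)
  le_devBound := mixBin₂_le_devBound hw0 hw hy
  le_sum hd hs _ hA := le_sum_mixBin₂ hw0 hw hy hd hs hA

end Mixture

/-! ### Power-law layers -/

lemma tendsto_descFactorial_div_pow (r : ℕ) :
    Tendsto (fun x : ℕ => (x.descFactorial r : ℝ) / (x : ℝ) ^ r) atTop (𝓝 1) :=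
  (Asymptotics.isEquivalent_iff_tendsto_one <| (eventually_ne_atTop 0).mono fun _ hx =>
    pow_ne_zero r (Nat.cast_ne_zero.2 hx)).1 (isEquivalent_descFactorial r)

lemma summable_of_tendsto_mul_rpow {w : ℕ → ℝ} {A γ : ℝ} (hγ : 1 < γ)
    (hw : Tendsto (fun x : ℕ => w x * (x : ℝ) ^ γ) atTop (𝓝 A)) : Summable w := by
  refine summable_of_isBigO_nat (Real.summable_nat_rpow.2 (by linarith : -γ < -1))
    (((hw.isBigO_one ℝ).mul (Asymptotics.isBigO_refl (fun x : ℕ => (x : ℝ) ^ (-γ)) atTop)).congr'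
      ?_ (.of_forall fun x => one_mul _))
  filter_upwards [eventually_gt_atTop 0] with x hx
  have : (0 : ℝ) < x := by exact_mod_cast hx
  rw [Real.rpow_neg this.le, mul_assoc, mul_inv_cancel₀ (by positivity), mul_one]

/-- The layer size density of `(r, s)`-biased layers, proportional to `(x)_r q(x)^s p(x)`. -/
def layerWeight (p q : ℕ → ℝ) (r s x : ℕ) : ℝ :=
  (x.descFactorial r : ℝ) * q x ^ s * p x / mom p q r s

lemma gInc_eq_mixBin (p q : ℕ → ℝ) : gInc p q = mixBin (layerWeight p q 1 0) (· - 1) q := by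
  ext s
  rw [gInc, ← tsum_div_const]
  refine tsum_congr fun x => ?_
  rw [layerWeight, Nat.descFactorial_one, pow_zero]
  ring

lemma f2p_eq_mixBin₂ (p q : ℕ → ℝ) : f2p p q = mixBin₂ (layerWeight p q 2 1) (· - 2) q := by
  ext s t
  rw [f2p, ← tsum_div_const]
  refine tsum_congr fun x => ?_
  rw [layerWeight, pow_one]
  ring

/-- The power-law layer type distribution of the paper: `p(x) ∼ a x^{-α}` and
`q(x) = min {1, b x^{-β}}`, with the exponents in the range of finite `P₂₁`. -/
structure IsPowerLawLayer (a b α β : ℝ) (p q : ℕ → ℝ) : Prop extends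
    IsPowerLawStrength b β q where
  a_pos : 0 < a
  three_lt : 3 < α + β
  p_nonneg : ∀ x, 0 ≤ p x
  tendsto_p : Tendsto (fun x : ℕ => p x * (x : ℝ) ^ α) atTop (𝓝 a)

namespace IsPowerLawLayer

variable {a b α β : ℝ} {p q : ℕ → ℝ}

lemma one_lt_tailExponent (h : IsPowerLawLayer a b α β p q) : 1 < (α - 2) / (1 - β) := by
  rw [one_lt_div h.one_sub_pos]
  linarith [h.three_lt]

lemma one_add_one_lt (h : IsPowerLawLayer a b α β p q) :
    (1 : ℕ) + 1 < α + β * (0 : ℕ) := by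
  push_cast
  linarith [h.three_lt, h.β_lt_one]

lemma two_add_one_lt (h : IsPowerLawLayer a b α β p q) : (2 : ℕ) + 1 < α + β * (1 : ℕ) := by
  push_cast
  linarith [h.three_lt]

lemma tendsto_moment_term (h : IsPowerLawLayer a b α β p q) (r s : ℕ) :
    Tendsto (fun x : ℕ => (x.descFactorial r : ℝ) * q x ^ s * p x * (x : ℝ) ^ (α + β * s - r))
      atTop (𝓝 (a * b ^ s)) := by
  have hlim := ((tendsto_descFactorial_div_pow r).mul h.tendsto_p).mul_const (b ^ s)
  rw [one_mul] at hlim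
  refine hlim.congr' ?_
  filter_upwards [h.eventually_eq, eventually_gt_atTop 0] with x hq hx
  have hx : (0 : ℝ) < x := by exact_mod_cast hx
  rw [hq, mul_pow, ← Real.rpow_natCast ((x : ℝ) ^ (-β)), ← Real.rpow_mul hx.le,
    Real.rpow_sub_natCast hx.ne', Real.rpow_add hx, neg_mul, Real.rpow_neg hx.le]
  field_simp

lemma summable_moment_term (h : IsPowerLawLayer a b α β p q) {r s : ℕ} (hr : r + 1 < α + β * s) :
    Summable fun x : ℕ => (x.descFactorial r : ℝ) * q x ^ s * p x :=
  summable_of_tendsto_mul_rpow (by linarith) (h.tendsto_moment_term r s)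

lemma moment_term_nonneg (h : IsPowerLawLayer a b α β p q) (r s x : ℕ) :
    0 ≤ (x.descFactorial r : ℝ) * q x ^ s * p x := by
  have := h.p_nonneg x
  have := (h.mem_Icc x).1
  positivity

lemma mom_pos (h : IsPowerLawLayer a b α β p q) {r s : ℕ} (hr : r + 1 < α + β * s) :
    0 < mom p q r s := by
  have hb := h.b_pos
  have ha := h.a_pos
  obtain ⟨x, hx⟩ := ((h.tendsto_moment_term r s).eventually_const_lt
    (by positivity : 0 < a * b ^ s)).exists
  exact (h.summable_moment_term hr).tsum_pos (h.moment_term_nonneg r s) x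
    (pos_of_mul_pos_left hx (by positivity))

lemma layerWeight_nonneg (h : IsPowerLawLayer a b α β p q) (r s x : ℕ) :
    0 ≤ layerWeight p q r s x :=
  div_nonneg (h.moment_term_nonneg r s x) (tsum_nonneg (h.moment_term_nonneg r s))

lemma hasSum_layerWeight (h : IsPowerLawLayer a b α β p q) {r s : ℕ} (hr : r + 1 < α + β * s) :
    HasSum (layerWeight p q r s) 1 := by
  have := (h.summable_moment_term hr).hasSum.div_const (mom p q r s)
  rwa [show ∑' x : ℕ, (x.descFactorial r : ℝ) * q x ^ s * p x = mom p q r s from rfl,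
    div_self (h.mom_pos hr).ne'] at this

lemma tendsto_mixBin_layerWeight (h : IsPowerLawLayer a b α β p q) {r s : ℕ}
    (hr : r + 1 < α + β * s) (k : ℕ) :
    Tendsto (fun n : ℕ => mixBin (layerWeight p q r s) (· - k) q n *
      (n : ℝ) ^ ((α + β * s - r - β) / (1 - β))) atTop
      (𝓝 (a * b ^ s / mom p q r s * b ^ ((α + β * s - r - β) / (1 - β) - 1) / (1 - β))) :=
  h.tendsto_mixBin_mul_rpow (h.layerWeight_nonneg r s) (h.hasSum_layerWeight hr).summable
    (((h.tendsto_moment_term r s).div_const (mom p q r s)).congr fun x => by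
      rw [layerWeight]; ring) k

lemma tendsto_gInc_mul_rpow (h : IsPowerLawLayer a b α β p q) :
    Tendsto (fun s : ℕ => gInc p q s * (s : ℝ) ^ (1 + (α - 2) / (1 - β))) atTop
      (𝓝 (a * b ^ ((α - 2) / (1 - β)) / ((1 - β) * mom p q 1 0))) := by
  have hne := h.one_sub_pos.ne'
  have hlim := h.tendsto_mixBin_layerWeight h.one_add_one_lt 1
  have hexp : (α + β * (0 : ℕ) - (1 : ℕ) - β) / (1 - β) = 1 + (α - 2) / (1 - β) := by
    push_cast
    field_simp
    ring
  rw [hexp, add_sub_cancel_left, pow_zero, mul_one, ← gInc_eq_mixBin] at hlim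
  convert hlim using 2
  field_simp

lemma tendsto_mixBin_layerWeight_two_one (h : IsPowerLawLayer a b α β p q) :
    Tendsto (fun s : ℕ => mixBin (layerWeight p q 2 1) (· - 2) q s *
      (s : ℝ) ^ ((α - 2) / (1 - β))) atTop
      (𝓝 (a * b ^ ((α - 2) / (1 - β)) / ((1 - β) * mom p q 2 1))) := by
  have hb := h.b_pos.ne'
  have hlim := h.tendsto_mixBin_layerWeight h.two_add_one_lt 2
  rw [show (α + β * (1 : ℕ) - (2 : ℕ) - β) / (1 - β) = (α - 2) / (1 - β) by push_cast; ring_nf,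
    Real.rpow_sub_one hb, pow_one] at hlim
  convert hlim using 2
  field_simp

end IsPowerLawLayer

/-! ### Convolutions with power-law tails -/

lemma mul_rpow_le_of_le_two_mul {v κ M : ℝ} {m n : ℕ} (hκ : 0 ≤ κ) (hv : 0 ≤ v)
    (h : v * (m : ℝ) ^ κ ≤ M) (hnm : n ≤ 2 * m) : v * (n : ℝ) ^ κ ≤ 2 ^ κ * M := by
  have hnm : (n : ℝ) ≤ 2 * m := by exact_mod_cast hnm
  calc v * (n : ℝ) ^ κ ≤ v * (2 * (m : ℝ)) ^ κ := by gcongr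
    _ = 2 ^ κ * (v * (m : ℝ) ^ κ) := by rw [Real.mul_rpow zero_le_two m.cast_nonneg]; ring
    _ ≤ 2 ^ κ * M := by gcongr

lemma tendsto_sub_mul_rpow {u : ℕ → ℝ} {κ U : ℝ}
    (hu : Tendsto (fun n : ℕ => u n * (n : ℝ) ^ κ) atTop (𝓝 U)) (k : ℕ) :
    Tendsto (fun n : ℕ => u (n - k) * (n : ℝ) ^ κ) atTop (𝓝 U) := by
  rw [← tendsto_add_atTop_iff_nat k]
  have hratio := (tendsto_natCast_div_add_atTop (k : ℝ)).rpow_const (p := -κ) (.inl one_ne_zero)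
  have hlim := hu.mul hratio
  rw [Real.one_rpow, mul_one] at hlim
  refine hlim.congr' ?_
  filter_upwards [eventually_gt_atTop 0] with n hn
  have : (0 : ℝ) < n := by exact_mod_cast hn
  rw [Nat.add_sub_cancel, Nat.cast_add, Real.rpow_neg (by positivity),
    Real.div_rpow this.le (by positivity)]
  field_simp

lemma tendsto_sum_range_mul_sub_mul_rpow {f u : ℕ → ℝ} (hf0 : ∀ i, 0 ≤ f i) (hf : Summable f)
    (hu0 : ∀ i, 0 ≤ u i) {κ U : ℝ} (hκ : 0 ≤ κ)
    (hu : Tendsto (fun n : ℕ => u n * (n : ℝ) ^ κ) atTop (𝓝 U)) {N : ℕ → ℕ}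
    (hN : Tendsto N atTop atTop) (hN2 : ∀ n, ∀ i < N n, 2 * i ≤ n) :
    Tendsto (fun n : ℕ => (∑ i ∈ Finset.range (N n), f i * u (n - i)) * (n : ℝ) ^ κ) atTop
      (𝓝 ((∑' i, f i) * U)) := by
  obtain ⟨M, hM⟩ := hu.bddAbove_range
  have hM0 : 0 ≤ M := (mul_nonneg (hu0 0) (by positivity)).trans (hM ⟨0, rfl⟩)
  have hdom := tendsto_tsum_of_dominated_convergence (𝓕 := atTop)
    (f := fun n i => if i < N n then f i * (u (n - i) * (n : ℝ) ^ κ) else 0)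
    (g := fun i => f i * U) (bound := fun i => f i * (2 ^ κ * M)) (hf.mul_right _) ?_ ?_
  · rw [tsum_mul_right] at hdom
    refine hdom.congr fun n => ?_
    rw [tsum_eq_sum (s := Finset.range (N n)) fun i hi => if_neg (by simpa using hi),
      Finset.sum_mul]
    refine Finset.sum_congr rfl fun i hi => ?_
    rw [if_pos (Finset.mem_range.1 hi), mul_assoc]
  · intro i
    refine ((tendsto_sub_mul_rpow hu i).const_mul (f i)).congr' ?_
    filter_upwards [hN.eventually_gt_atTop i] with n hn
    rw [if_pos hn]
  · refine .of_forall fun n i => ?_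
    split_ifs with hi
    · rw [Real.norm_of_nonneg
        (mul_nonneg (hf0 i) (mul_nonneg (hu0 _) (Real.rpow_nonneg n.cast_nonneg κ)))]
      have := hN2 n i hi
      exact mul_le_mul_of_nonneg_left
        (mul_rpow_le_of_le_two_mul hκ (hu0 _) (hM ⟨n - i, rfl⟩) (by lia)) (hf0 i)
    · rw [norm_zero]
      have := hf0 i
      positivity

lemma conv_eq_sum_range_half_add (f u : ℕ → ℝ) (n : ℕ) :
    conv f u n = ∑ i ∈ Finset.range (n / 2 + 1), f i * u (n - i) +
      ∑ i ∈ Finset.range (n - n / 2), u i * f (n - i) := by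
  rw [conv, show n + 1 = n / 2 + 1 + (n - n / 2) by lia, Finset.sum_range_add,
    ← Finset.sum_range_reflect (fun i => u i * f (n - i))]
  refine congrArg _ (Finset.sum_congr rfl fun i hi => ?_)
  have hi := Finset.mem_range.1 hi
  rw [mul_comm, show n - n / 2 - 1 - i = n - (n / 2 + 1 + i) by lia,
    show n - (n - (n / 2 + 1 + i)) = n / 2 + 1 + i by lia]

lemma tendsto_conv_mul_rpow {f u : ℕ → ℝ} (hf0 : ∀ i, 0 ≤ f i) (hf : Summable f)
    (hu0 : ∀ i, 0 ≤ u i) (hu : Summable u) {κ F U : ℝ} (hκ : 0 ≤ κ)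
    (hfκ : Tendsto (fun n : ℕ => f n * (n : ℝ) ^ κ) atTop (𝓝 F))
    (huκ : Tendsto (fun n : ℕ => u n * (n : ℝ) ^ κ) atTop (𝓝 U)) :
    Tendsto (fun n : ℕ => conv f u n * (n : ℝ) ^ κ) atTop
      (𝓝 ((∑' i, f i) * U + (∑' i, u i) * F)) := by
  have hhead := tendsto_sum_range_mul_sub_mul_rpow hf0 hf hu0 hκ huκ (N := fun n => n / 2 + 1)
    (tendsto_atTop_atTop.2 fun k => ⟨2 * k, fun n hn => by lia⟩) fun n i hi => by lia
  have htail := tendsto_sum_range_mul_sub_mul_rpow hu0 hu hf0 hκ hfκ (N := fun n => n - n / 2)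
    (tendsto_atTop_atTop.2 fun k => ⟨2 * k, fun n hn => by lia⟩) fun n i hi => by lia
  exact (hhead.add htail).congr fun n => by rw [← add_mul, ← conv_eq_sum_range_half_add]

lemma conv_mul_rpow_le {f u : ℕ → ℝ} (hf0 : ∀ i, 0 ≤ f i) (hu0 : ∀ i, 0 ≤ u i) (hu00 : u 0 = 0)
    {κ C M : ℝ} (hκ : 0 ≤ κ) (hC : ∀ i : ℕ, u i * (i : ℝ) ^ κ ≤ C) (hM : 0 ≤ M) (n : ℕ)
    (hf : ∀ m < n, f m * (m : ℝ) ^ (1 + κ) ≤ M) :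
    conv u f n * (n : ℝ) ^ (1 + κ) ≤
      (∑ i ∈ Finset.range (n + 1), u i) * (2 ^ (1 + κ) * M) +
        n * (2 ^ κ * C) * ∑ i ∈ Finset.range (n + 1), f i := by
  have hC0 : 0 ≤ C := (mul_nonneg (hu0 0) (by positivity)).trans (hC 0)
  rw [conv, Finset.sum_mul, Finset.sum_mul, ← Finset.sum_flip f, Finset.mul_sum,
    ← Finset.sum_add_distrib]
  refine Finset.sum_le_sum fun i _ => ?_
  have hui := hu0 i
  have hfi := hf0 (n - i)
  rcases Nat.eq_zero_or_pos i with rfl | hi0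
  · rw [hu00, zero_mul, zero_mul, zero_mul, zero_add]
    positivity
  rcases le_or_gt (2 * i) n with hi | hi
  · have hterm := mul_rpow_le_of_le_two_mul (by positivity) hfi (hf (n - i) (by lia))
      (show n ≤ 2 * (n - i) by lia)
    calc u i * f (n - i) * (n : ℝ) ^ (1 + κ) = u i * (f (n - i) * (n : ℝ) ^ (1 + κ)) :=
          mul_assoc _ _ _
      _ ≤ u i * (2 ^ (1 + κ) * M) := by gcongr
      _ ≤ _ := le_add_of_nonneg_right (by positivity)
  · have hterm := mul_rpow_le_of_le_two_mul hκ hui (hC i) hi.le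
    calc u i * f (n - i) * (n : ℝ) ^ (1 + κ) = n * (u i * (n : ℝ) ^ κ) * f (n - i) := by
          rw [Real.rpow_one_add' n.cast_nonneg (by positivity)]; ring
      _ ≤ n * (2 ^ κ * C) * f (n - i) := by gcongr
      _ ≤ _ := le_add_of_nonneg_left (by positivity)

/-! ### Compound Poisson distributions -/

lemma conv_nonneg {f g : ℕ → ℝ} (hf : ∀ i, 0 ≤ f i) (hg : ∀ i, 0 ≤ g i) (s : ℕ) :
    0 ≤ conv f g s :=
  Finset.sum_nonneg fun _ _ => mul_nonneg (hf _) (hg _)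

lemma hasSum_conv {f g : ℕ → ℝ} {A B : ℝ} (hA : HasSum f A) (hB : HasSum g B) :
    HasSum (conv f g) (A * B) := by
  rw [← hA.tsum_eq, ← hB.tsum_eq]
  exact hasSum_sum_range_mul_of_summable_norm hA.summable.norm hB.summable.norm

lemma convPow_nonneg {g : ℕ → ℝ} (hg : ∀ i, 0 ≤ g i) (j s : ℕ) : 0 ≤ convPow g j s := by
  induction j generalizing s with
  | zero => simp only [convPow]; positivity
  | succ j ih => exact conv_nonneg hg ih s

lemma hasSum_convPow {g : ℕ → ℝ} (hs : HasSum g 1) (j : ℕ) :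
    HasSum (convPow g j) 1 := by
  induction j with
  | zero => exact hasSum_ite_eq 0 1
  | succ j ih => simpa [convPow] using hasSum_conv hs ih

lemma conv_eq_coeff_mul (f g : ℕ → ℝ) (s : ℕ) :
    conv f g s = PowerSeries.coeff s (PowerSeries.mk f * PowerSeries.mk g) := by
  rw [PowerSeries.coeff_mul, Finset.Nat.sum_antidiagonal_eq_sum_range_succ_mk]
  simp only [conv, PowerSeries.coeff_mk]

lemma mk_convPow (g : ℕ → ℝ) (j : ℕ) :
    PowerSeries.mk (convPow g j) = PowerSeries.mk g ^ j := by
  induction j with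
  | zero => ext s; simp [convPow, PowerSeries.coeff_one]
  | succ j ih =>
    ext s
    rw [pow_succ', ← ih, ← conv_eq_coeff_mul, PowerSeries.coeff_mk, convPow]

lemma mk_natCast_mul (g : ℕ → ℝ) :
    PowerSeries.mk (fun i : ℕ => (i : ℝ) * g i) =
      PowerSeries.X * PowerSeries.derivative ℝ (PowerSeries.mk g) := by
  ext s
  cases s with
  | zero => simp
  | succ s => simp [PowerSeries.coeff_succ_X_mul, PowerSeries.coeff_derivative, mul_comm]

lemma natCast_mul_convPow_succ (g : ℕ → ℝ) (j n : ℕ) :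
    (n : ℝ) * convPow g (j + 1) n =
      (j + 1) * conv (fun i : ℕ => (i : ℝ) * g i) (convPow g j) n := by
  have hderiv : PowerSeries.mk (fun i : ℕ => (i : ℝ) * convPow g (j + 1) i) =
      PowerSeries.C ((j : ℝ) + 1) *
        (PowerSeries.mk (fun i : ℕ => (i : ℝ) * g i) * PowerSeries.mk (convPow g j)) := by
    rw [mk_natCast_mul, mk_natCast_mul, mk_convPow, mk_convPow, PowerSeries.derivative_pow,
      Nat.add_sub_cancel, map_add, map_one, map_natCast, Nat.cast_add, Nat.cast_one]
    ring
  rw [conv_eq_coeff_mul, ← PowerSeries.coeff_C_mul, ← hderiv, PowerSeries.coeff_mk]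

section CompoundPoisson

variable {g : ℕ → ℝ} {lam : ℝ}

lemma hasSum_poisson (hlam : 0 ≤ lam) :
    HasSum (fun j : ℕ => Real.exp (-lam) * lam ^ j / (j.factorial : ℝ)) 1 :=
  hasSum_one_poissonMeasure ⟨lam, hlam⟩

lemma cpoi_nonneg (hg : ∀ i, 0 ≤ g i) (hlam : 0 ≤ lam) (s : ℕ) : 0 ≤ cpoi lam g s :=
  tsum_nonneg fun j => mul_nonneg (by positivity) (convPow_nonneg hg j s)

lemma hasSum_cpoi (hg : ∀ i, 0 ≤ g i) (hs : HasSum g 1) (hlam : 0 ≤ lam) :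
    HasSum (cpoi lam g) 1 :=
  hasSum_tsum_swap_of_nonneg (fun j s => mul_nonneg (by positivity) (convPow_nonneg hg j s))
    (fun j => by simpa using (hasSum_convPow hs j).mul_left _) (hasSum_poisson hlam)

lemma summable_poisson_mul_convPow (hg : ∀ i, 0 ≤ g i) (hs : HasSum g 1) (hlam : 0 ≤ lam)
    (s : ℕ) :
    Summable fun j : ℕ => Real.exp (-lam) * lam ^ j / (j.factorial : ℝ) * convPow g j s :=
  summable_mul_of_mem_Icc (fun j => by positivity) (hasSum_poisson hlam).summable fun j =>
    ⟨convPow_nonneg hg j s,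
      le_hasSum (hasSum_convPow hs j) s fun t _ => convPow_nonneg hg j t⟩

lemma natCast_mul_cpoi (hg : ∀ i, 0 ≤ g i) (hs : HasSum g 1) (hlam : 0 ≤ lam) (n : ℕ) :
    (n : ℝ) * cpoi lam g n = conv (fun i : ℕ => lam * (i * g i)) (cpoi lam g) n := by
  set w : ℕ → ℝ := fun j => Real.exp (-lam) * lam ^ j / (j.factorial : ℝ) with hw
  have hsum : ∀ s, Summable fun j => w j * convPow g j s :=
    summable_poisson_mul_convPow hg hs hlam
  have hzero : (n : ℝ) * (w 0 * convPow g 0 n) = 0 := by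
    rcases eq_or_ne n 0 with rfl | hn
    · simp
    · simp [convPow, hn]
  have hsucc : ∀ j : ℕ, w (j + 1) * (j + 1) = lam * w j := fun j => by
    simp only [hw, Nat.factorial_succ, pow_succ, Nat.cast_mul, Nat.cast_add, Nat.cast_one]
    field_simp
  have hterm : ∀ j : ℕ, (n : ℝ) * (w (j + 1) * convPow g (j + 1) n) =
      ∑ i ∈ Finset.range (n + 1), lam * (i * g i) * (w j * convPow g j (n - i)) := fun j =>
    calc (n : ℝ) * (w (j + 1) * convPow g (j + 1) n)
        = w (j + 1) * (n * convPow g (j + 1) n) := by ring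
      _ = lam * w j * conv (fun i : ℕ => (i : ℝ) * g i) (convPow g j) n := by
          rw [natCast_mul_convPow_succ, ← mul_assoc, hsucc]
      _ = _ := by
          rw [conv, Finset.mul_sum]
          exact Finset.sum_congr rfl fun i _ => by ring
  calc (n : ℝ) * cpoi lam g n = ∑' j, (n : ℝ) * (w j * convPow g j n) := tsum_mul_left.symm
    _ = ∑' j, ∑ i ∈ Finset.range (n + 1), lam * (i * g i) * (w j * convPow g j (n - i)) := by
        rw [((hsum n).mul_left _).tsum_eq_zero_add, hzero, zero_add, tsum_congr hterm]
    _ = ∑ i ∈ Finset.range (n + 1), ∑' j, lam * (i * g i) * (w j * convPow g j (n - i)) :=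
        Summable.tsum_finsetSum fun i _ => (hsum (n - i)).mul_left _
    _ = conv (fun i : ℕ => lam * (i * g i)) (cpoi lam g) n :=
        Finset.sum_congr rfl fun i _ => tsum_mul_left

end CompoundPoisson

section Panjer

variable {f u : ℕ → ℝ} {κ c F : ℝ}

lemma exists_mul_rpow_le_of_panjer (hf0 : ∀ i, 0 ≤ f i) (hf : Summable f) (hu0 : ∀ i, 0 ≤ u i)
    (hus : Summable u) (hu00 : u 0 = 0) (hκ : 0 ≤ κ)
    (hu : Tendsto (fun n : ℕ => u n * (n : ℝ) ^ κ) atTop (𝓝 c))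
    (hrec : ∀ n : ℕ, (n : ℝ) * f n = conv u f n) :
    ∃ M, ∀ n : ℕ, f n * (n : ℝ) ^ (1 + κ) ≤ M := by
  obtain ⟨C, hC⟩ := hu.bddAbove_range
  have hC : ∀ i : ℕ, u i * (i : ℝ) ^ κ ≤ C := fun i => hC ⟨i, rfl⟩
  have hC0 : 0 ≤ C := (mul_nonneg (hu0 0) (by positivity)).trans (hC 0)
  set U := ∑' i, u i
  set F := ∑' i, f i
  have hU : ∀ n, ∑ i ∈ Finset.range (n + 1), u i ≤ U := fun n =>
    hus.sum_le_tsum _ fun i _ => hu0 i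
  have hF : ∀ n, ∑ i ∈ Finset.range (n + 1), f i ≤ F := fun n => hf.sum_le_tsum _ fun i _ => hf0 i
  have : 0 ≤ F := tsum_nonneg hf0
  obtain ⟨N, hN⟩ := exists_nat_gt (2 * (U * 2 ^ (1 + κ)))
  obtain ⟨B, hB⟩ := ((Set.finite_Iic N).image fun n : ℕ => f n * (n : ℝ) ^ (1 + κ)).bddAbove
  set M := max B (2 * (2 ^ κ * C * F))
  have hMF : 2 * (2 ^ κ * C * F) ≤ M := le_max_right _ _
  have hM : 0 ≤ M := le_trans (by positivity) hMF
  refine ⟨M, fun n => ?_⟩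
  induction n using Nat.strong_induction_on with
  | _ n ih =>
  rcases le_or_gt n N with hn | hn
  · exact (hB ⟨n, hn, rfl⟩).trans (le_max_left _ _)
  have hNn : (N : ℝ) < n := by exact_mod_cast hn
  refine le_of_mul_le_mul_left ?_ (N.cast_nonneg.trans_lt hNn)
  calc (n : ℝ) * (f n * (n : ℝ) ^ (1 + κ)) = conv u f n * (n : ℝ) ^ (1 + κ) := by
        rw [← hrec, mul_assoc]
    _ ≤ U * (2 ^ (1 + κ) * M) + n * (2 ^ κ * C) * F :=
        (conv_mul_rpow_le hf0 hu0 hu00 hκ hC hM n ih).trans (by gcongr <;> grind)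
    _ = 2 * (U * 2 ^ (1 + κ)) * (M / 2) + n * (2 * (2 ^ κ * C * F)) / 2 := by ring
    _ ≤ n * (M / 2) + n * M / 2 := by gcongr; exact (hN.trans hNn).le
    _ = n * M := by ring

lemma tendsto_mul_rpow_of_panjer (hf0 : ∀ i, 0 ≤ f i) (hf : HasSum f F) (hu0 : ∀ i, 0 ≤ u i)
    (hu00 : u 0 = 0) (hκ : 1 < κ)
    (hu : Tendsto (fun n : ℕ => u n * (n : ℝ) ^ κ) atTop (𝓝 c))
    (hrec : ∀ n : ℕ, (n : ℝ) * f n = conv u f n) :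
    Tendsto (fun n : ℕ => f n * (n : ℝ) ^ (1 + κ)) atTop (𝓝 (F * c)) := by
  have hus : Summable u := summable_of_tendsto_mul_rpow hκ hu
  have hκ0 : 0 ≤ κ := zero_le_one.trans hκ.le
  obtain ⟨M, hM⟩ := exists_mul_rpow_le_of_panjer hf0 hf.summable hu0 hus hu00 hκ0 hu hrec
  have hrpow : ∀ n : ℕ, (n : ℝ) ^ (1 + κ) = n * (n : ℝ) ^ κ := fun n =>
    Real.rpow_one_add' n.cast_nonneg (by positivity)
  have hf2 : Tendsto (fun n : ℕ => f n * (n : ℝ) ^ κ) atTop (𝓝 0) := by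
    refine squeeze_zero' (.of_forall fun n => mul_nonneg (hf0 n) (by positivity)) ?_
      (tendsto_const_div_atTop_nhds_zero_nat M)
    filter_upwards [eventually_gt_atTop 0] with n hn
    rw [le_div_iff₀ (by exact_mod_cast hn), mul_assoc, mul_comm _ (n : ℝ), ← hrpow]
    exact hM n
  have hlim := tendsto_conv_mul_rpow hu0 hus hf0 hf.summable hκ0 hu hf2
  rw [mul_zero, zero_add, hf.tsum_eq] at hlim
  exact hlim.congr fun n => by rw [← hrec, hrpow]; ring

end Panjer

lemma tendsto_cpoi_mul_rpow {g : ℕ → ℝ} (hg : ∀ i, 0 ≤ g i) (hs : HasSum g 1) {lam κ c : ℝ}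
    (hlam : 0 ≤ lam) (hκ : 1 < κ)
    (hgκ : Tendsto (fun n : ℕ => g n * (n : ℝ) ^ (1 + κ)) atTop (𝓝 c)) :
    Tendsto (fun n : ℕ => cpoi lam g n * (n : ℝ) ^ (1 + κ)) atTop (𝓝 (lam * c)) := by
  have hu : Tendsto (fun n : ℕ => lam * (n * g n) * (n : ℝ) ^ κ) atTop (𝓝 (lam * c)) :=
    (hgκ.const_mul lam).congr fun n => by
      rw [Real.rpow_one_add' n.cast_nonneg (by positivity)]; ring
  simpa using tendsto_mul_rpow_of_panjer (cpoi_nonneg hg hlam) (hasSum_cpoi hg hs hlam)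
    (fun i => mul_nonneg hlam (mul_nonneg i.cast_nonneg (hg i))) (by simp) hκ hu
    (natCast_mul_cpoi hg hs hlam)

namespace IsPowerLawLayer

variable {a b α β mu : ℝ} {p q : ℕ → ℝ}

lemma gInc_nonneg (h : IsPowerLawLayer a b α β p q) (s : ℕ) : 0 ≤ gInc p q s := by
  rw [gInc_eq_mixBin]
  exact mixBin_nonneg (h.layerWeight_nonneg 1 0) h.mem_Icc s

lemma hasSum_gInc (h : IsPowerLawLayer a b α β p q) : HasSum (gInc p q) 1 := by
  rw [gInc_eq_mixBin]
  exact hasSum_mixBin (h.layerWeight_nonneg 1 0)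
    (h.hasSum_layerWeight h.one_add_one_lt) h.mem_Icc

lemma barf1_nonneg (h : IsPowerLawLayer a b α β p q) (hmu : 0 ≤ mu) (s : ℕ) :
    0 ≤ barf1 mu p q s :=
  cpoi_nonneg h.gInc_nonneg (mul_nonneg hmu (h.mom_pos h.one_add_one_lt).le) s

lemma hasSum_barf1 (h : IsPowerLawLayer a b α β p q) (hmu : 0 ≤ mu) :
    HasSum (barf1 mu p q) 1 :=
  hasSum_cpoi h.gInc_nonneg h.hasSum_gInc
    (mul_nonneg hmu (h.mom_pos h.one_add_one_lt).le)

lemma tendsto_barf1_mul_rpow (h : IsPowerLawLayer a b α β p q) (hmu : 0 ≤ mu) :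
    Tendsto (fun s : ℕ => barf1 mu p q s * (s : ℝ) ^ (1 + (α - 2) / (1 - β))) atTop
      (𝓝 (mu * a * b ^ ((α - 2) / (1 - β)) / (1 - β))) := by
  have hmom := h.mom_pos h.one_add_one_lt
  have hlim := tendsto_cpoi_mul_rpow h.gInc_nonneg h.hasSum_gInc
    (mul_nonneg hmu hmom.le) h.one_lt_tailExponent h.tendsto_gInc_mul_rpow
  rwa [show mu * mom p q 1 0 * (a * b ^ ((α - 2) / (1 - β)) / ((1 - β) * mom p q 1 0)) =
    mu * a * b ^ ((α - 2) / (1 - β)) / (1 - β) by field_simp] at hlim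

end IsPowerLawLayer

/-! ### Bidegree convolutions -/

lemma conv2_delta11_succ_succ (G : ℕ → ℕ → ℝ) (s t : ℕ) :
    conv2 delta11 G (s + 1) (t + 1) = G s t := by
  rw [conv2, Finset.sum_eq_single_of_mem 1 (by simp) fun i _ hi => by simp [delta11, hi],
    Finset.sum_eq_single_of_mem 1 (by simp) fun j _ hj => by simp [delta11, hj]]
  simp [delta11]

lemma conv2_delta11_eq_zero (G : ℕ → ℕ → ℝ) {s t : ℕ} (h : s = 0 ∨ t = 0) :
    conv2 delta11 G s t = 0 := by
  refine Finset.sum_eq_zero fun i hi => Finset.sum_eq_zero fun j hj => ?_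
  rw [Finset.mem_range] at hi hj
  rw [delta11, if_neg (by lia), zero_mul]

lemma conv2_conv2_delta11_succ_succ (G F : ℕ → ℕ → ℝ) (m n : ℕ) :
    conv2 (conv2 delta11 G) F (m + 1) (n + 1) = conv2 G F m n := by
  rw [conv2, Finset.sum_range_succ', Finset.sum_eq_zero (s := Finset.range (n + 1 + 1))
    fun j _ => by rw [conv2_delta11_eq_zero _ (.inl rfl), zero_mul], add_zero]
  refine Finset.sum_congr rfl fun i _ => ?_
  rw [Finset.sum_range_succ', conv2_delta11_eq_zero _ (.inr rfl), zero_mul, add_zero]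
  exact Finset.sum_congr rfl fun j _ => by
    rw [conv2_delta11_succ_succ, Nat.add_sub_add_right, Nat.add_sub_add_right]

namespace ConcentratesNearDiagonal

variable {f h : ℕ → ℝ} {F : ℕ → ℕ → ℝ} {m n : ℕ} {d : ℝ}

lemma mul_le_add_devBound (hF : ConcentratesNearDiagonal F h) (hf0 : ∀ i, 0 ≤ f i)
    (hf1 : ∀ i, f i ≤ 1) (hmn : m ≤ n) (hd : 0 < d) {Φ : ℝ} (hΦ0 : 0 ≤ Φ)
    (hΦ : ∀ j : ℕ, (n : ℝ) - m - d ≤ j → f j ≤ Φ) {i j : ℕ} (hi : i ≤ m) (hj : j ≤ n) :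
    f i * f j * F (m - i) (n - j) ≤ Φ * f i * F (m - i) (n - j) + devBound n d := by
  have hFij := hF.nonneg (m - i) (n - j)
  rcases le_or_gt d |((m - i : ℕ) : ℝ) - (n - j : ℕ)| with hfar | hnear
  · have hdev := hF.le_devBound (M := n) hd (by exact_mod_cast (show m - i ≤ n by lia))
      (by exact_mod_cast n.sub_le j) hfar
    have hmain := mul_nonneg (mul_nonneg hΦ0 (hf0 i)) hFij
    have hle := mul_le_of_le_one_left hFij (mul_le_one₀ (hf1 i) (hf0 j) (hf1 j))
    linarith
  · have hnear := (abs_lt.1 hnear).1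
    rw [Nat.cast_sub hi, Nat.cast_sub hj] at hnear
    have hfj := hΦ j (by linarith [i.cast_nonneg (α := ℝ)])
    rw [mul_comm (f i)]
    exact le_add_of_le_of_nonneg (by gcongr; exact hf0 i) (devBound_pos _ _).le

lemma conv2_le (hF : ConcentratesNearDiagonal F h) (hf0 : ∀ i, 0 ≤ f i) (hf1 : ∀ i, f i ≤ 1)
    (hmn : m ≤ n) (hd : 0 < d) {Φ : ℝ} (hΦ0 : 0 ≤ Φ)
    (hΦ : ∀ j : ℕ, (n : ℝ) - m - d ≤ j → f j ≤ Φ) :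
    conv2 (fun i j => f i * f j) F m n ≤
      Φ * conv f h m + (m + 1) * (n + 1) * devBound n d := by
  calc conv2 (fun i j => f i * f j) F m n
      ≤ ∑ i ∈ Finset.range (m + 1), ∑ j ∈ Finset.range (n + 1),
          (Φ * f i * F (m - i) (n - j) + devBound n d) :=
        Finset.sum_le_sum fun i hi => Finset.sum_le_sum fun j hj =>
          hF.mul_le_add_devBound hf0 hf1 hmn hd hΦ0 hΦ (Finset.mem_range_succ_iff.1 hi)
            (Finset.mem_range_succ_iff.1 hj)
    _ = ∑ i ∈ Finset.range (m + 1),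
          (Φ * f i * ∑ t ∈ Finset.range (n + 1), F (m - i) t + (n + 1) * devBound n d) :=
        Finset.sum_congr rfl fun i _ => by
          rw [Finset.sum_add_distrib, ← Finset.mul_sum, Finset.sum_flip (F (m - i)),
            Finset.sum_const, Finset.card_range, nsmul_eq_mul, Nat.cast_succ]
    _ ≤ ∑ i ∈ Finset.range (m + 1), (Φ * f i * h (m - i) + (n + 1) * devBound n d) := by
        gcongr with i
        · exact mul_nonneg hΦ0 (hf0 i)
        · exact hF.sum_le _ _
    _ = _ := by
        rw [Finset.sum_add_distrib, conv, Finset.mul_sum, Finset.sum_const, Finset.card_range,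
          nsmul_eq_mul, Nat.cast_succ, mul_assoc]
        simp only [mul_assoc]

lemma mul_le_sum_mul (hF : ConcentratesNearDiagonal F h) (hf0 : ∀ i, 0 ≤ f i) (hd : 0 < d)
    (hgap : d ≤ (n : ℝ) - m) {i : ℕ} (hi : i ≤ m) {φ : ℝ} (hφ0 : 0 ≤ φ)
    (hφ : ∀ j : ℕ, (n : ℝ) - m - d ≤ j → (j : ℝ) ≤ (n : ℝ) - m + i + d → φ ≤ f j) :
    φ * ((1 - varRatio n d) * h (m - i) - devBound n d) ≤
      ∑ j ∈ Finset.range (n + 1), f j * F (m - i) (n - j) := by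
  have hmi : ((m - i : ℕ) : ℝ) = m - i := Nat.cast_sub hi
  have : (0 : ℝ) ≤ i := i.cast_nonneg
  set A := (Finset.range (n + 1)).filter fun t : ℕ => |(t : ℝ) - (m - i : ℕ)| ≤ d
  have hA : ∀ t : ℕ, |(t : ℝ) - (m - i : ℕ)| ≤ d → t ∈ A := fun t ht => by
    refine Finset.mem_filter.2 ⟨Finset.mem_range_succ_iff.2 ?_, ht⟩
    rw [hmi] at ht
    exact_mod_cast (by linarith [(abs_le.1 ht).2] : (t : ℝ) ≤ n)
  calc φ * ((1 - varRatio n d) * h (m - i) - devBound n d)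
      ≤ φ * ∑ t ∈ A, F (m - i) t := by
        gcongr
        exact hF.le_sum hd (by linarith) hA
    _ ≤ ∑ t ∈ A, f (n - t) * F (m - i) t := by
        rw [Finset.mul_sum]
        refine Finset.sum_le_sum fun t ht => mul_le_mul_of_nonneg_right ?_ (hF.nonneg _ _)
        obtain ⟨htn, ht⟩ := Finset.mem_filter.1 ht
        have hnt : ((n - t : ℕ) : ℝ) = n - t := Nat.cast_sub (Finset.mem_range_succ_iff.1 htn)
        rw [hmi, abs_le] at ht
        exact hφ _ (by linarith) (by linarith)
    _ ≤ ∑ t ∈ Finset.range (n + 1), f (n - t) * F (m - i) t :=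
        Finset.sum_le_sum_of_subset_of_nonneg (Finset.filter_subset _ _)
          fun t _ _ => mul_nonneg (hf0 _) (hF.nonneg _ _)
    _ = ∑ j ∈ Finset.range (n + 1), f j * F (m - i) (n - j) := by
        rw [← Finset.sum_flip]
        refine Finset.sum_congr rfl fun j hj => ?_
        rw [Nat.sub_sub_self (Finset.mem_range_succ_iff.1 hj)]

lemma le_conv2 (hF : ConcentratesNearDiagonal F h) (hf0 : ∀ i, 0 ≤ f i) (hd : 0 < d)
    (hgap : d ≤ (n : ℝ) - m) {J : ℕ} (hJ : J ≤ m + 1) {φ : ℝ} (hφ0 : 0 ≤ φ)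
    (hφ : ∀ j : ℕ, (n : ℝ) - m - d ≤ j → (j : ℝ) ≤ (n : ℝ) - m + J + d → φ ≤ f j) :
    φ * ∑ i ∈ Finset.range J, f i * ((1 - varRatio n d) * h (m - i) - devBound n d) ≤
      conv2 (fun i j => f i * f j) F m n := by
  calc φ * ∑ i ∈ Finset.range J, f i * ((1 - varRatio n d) * h (m - i) - devBound n d)
      = ∑ i ∈ Finset.range J,
          f i * (φ * ((1 - varRatio n d) * h (m - i) - devBound n d)) := by
        rw [Finset.mul_sum]
        exact Finset.sum_congr rfl fun i _ => mul_left_comm _ _ _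
    _ ≤ ∑ i ∈ Finset.range J, f i * ∑ j ∈ Finset.range (n + 1), f j * F (m - i) (n - j) := by
        refine Finset.sum_le_sum fun i hi => mul_le_mul_of_nonneg_left ?_ (hf0 i)
        have hi : i < J := Finset.mem_range.1 hi
        have hiJ : (i : ℝ) ≤ J := by exact_mod_cast hi.le
        exact hF.mul_le_sum_mul hf0 hd hgap (by lia) hφ0 fun j hj hj' =>
          hφ j hj (by linarith)
    _ ≤ ∑ i ∈ Finset.range (m + 1), f i * ∑ j ∈ Finset.range (n + 1), f j * F (m - i) (n - j) :=
        Finset.sum_le_sum_of_subset_of_nonneg (Finset.range_subset_range.2 hJ) fun i _ _ =>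
          mul_nonneg (hf0 i) (Finset.sum_nonneg fun j _ => mul_nonneg (hf0 j) (hF.nonneg _ _))
    _ = _ := Finset.sum_congr rfl fun i _ => by simp only [Finset.mul_sum, mul_assoc]

end ConcentratesNearDiagonal

/-! ### Separated indices -/

/-- Indices `m ≤ n` tending to infinity whose gap `n - m` is large compared to a scale `d`, where
`d` is so large that a binomial variable of size at most `n` deviates from its mean by `d / 2` with
probability decaying faster than any power of `n`. -/
structure IsSeparationScale {ι : Type*} (l : Filter ι) (m n : ι → ℕ) (d : ι → ℝ) : Prop where
  tendsto_left : Tendsto m l atTop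
  tendsto_scale : Tendsto d l atTop
  tendsto_gap_div : Tendsto (fun k => ((n k : ℝ) - m k) / d k) l atTop
  tendsto_varRatio : Tendsto (fun k => varRatio (n k) (d k)) l (𝓝 0)
  tendsto_rpow_mul_devBound : ∀ {E : ℝ}, 0 ≤ E →
    Tendsto (fun k => (n k : ℝ) ^ E * devBound (n k) (d k)) l (𝓝 0)

lemma eventually_two_mul_le_of_tendsto_div {ι : Type*} {l : Filter ι} {x d : ι → ℝ}
    (hd : Tendsto d l atTop) (hx : Tendsto (fun k => x k / d k) l atTop) :
    ∀ᶠ k in l, 2 * d k ≤ x k := by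
  filter_upwards [hd.eventually_gt_atTop 0, hx.eventually_ge_atTop 2] with k hpos hk
  rwa [le_div_iff₀ hpos] at hk

lemma tendsto_div_add_rpow_of_div_tendsto_zero {ι : Type*} {l : Filter ι} {x c : ι → ℝ}
    (hx : ∀ᶠ k in l, x k ≠ 0) (hc : Tendsto (fun k => c k / x k) l (𝓝 0)) (p : ℝ) :
    Tendsto (fun k => (x k / (x k + c k)) ^ p) l (𝓝 1) := by
  have hlim := ((hc.const_add 1).inv₀ (by simp)).rpow_const (p := p) (.inl (by simp))
  simp only [add_zero, inv_one, Real.one_rpow] at hlim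
  refine hlim.congr' ?_
  filter_upwards [hx] with k hk
  rw [← inv_div (x k + c k), add_div, div_self hk]

namespace IsSeparationScale

variable {ι : Type*} {l : Filter ι} {m n : ι → ℕ} {d : ι → ℝ}

lemma eventually_two_mul_le_gap (hs : IsSeparationScale l m n d) :
    ∀ᶠ k in l, 2 * d k ≤ (n k : ℝ) - m k :=
  eventually_two_mul_le_of_tendsto_div hs.tendsto_scale hs.tendsto_gap_div

lemma eventually_le (hs : IsSeparationScale l m n d) : ∀ᶠ k in l, m k ≤ n k := by
  filter_upwards [hs.eventually_two_mul_le_gap, hs.tendsto_scale.eventually_ge_atTop 0]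
    with k hk hd
  exact_mod_cast (by linarith : (m k : ℝ) ≤ n k)

lemma tendsto_gap_sub (hs : IsSeparationScale l m n d) :
    Tendsto (fun k => (n k : ℝ) - m k - d k) l atTop :=
  tendsto_atTop_mono' l (hs.eventually_two_mul_le_gap.mono fun k hk => by linarith)
    hs.tendsto_scale

lemma tendsto_gap (hs : IsSeparationScale l m n d) :
    Tendsto (fun k => (n k : ℝ) - m k) l atTop := by
  simpa using hs.tendsto_gap_sub.atTop_add_atTop hs.tendsto_scale

lemma tendsto_div_gap (hs : IsSeparationScale l m n d) :
    Tendsto (fun k => d k / ((n k : ℝ) - m k)) l (𝓝 0) :=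
  hs.tendsto_gap_div.inv_tendsto_atTop.congr fun _ => inv_div _ _

lemma tendsto_gap_div_gap_sub_rpow (hs : IsSeparationScale l m n d) (p : ℝ) :
    Tendsto (fun k => (((n k : ℝ) - m k) / ((n k : ℝ) - m k - d k)) ^ p) l (𝓝 1) :=
  tendsto_div_add_rpow_of_div_tendsto_zero (hs.tendsto_gap.eventually_ne_atTop 0)
    (by simpa only [neg_div, neg_zero] using hs.tendsto_div_gap.neg) p

lemma tendsto_gap_div_gap_add_rpow (hs : IsSeparationScale l m n d) (J p : ℝ) :
    Tendsto (fun k => (((n k : ℝ) - m k) / ((n k : ℝ) - m k + J + d k)) ^ p) l (𝓝 1) := by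
  have hJ := (hs.tendsto_gap.const_div_atTop J).add hs.tendsto_div_gap
  simp only [add_zero, ← add_div] at hJ
  simpa only [add_assoc] using
    tendsto_div_add_rpow_of_div_tendsto_zero (hs.tendsto_gap.eventually_ne_atTop 0) hJ p

lemma tendsto_devBound_mul_left_rpow (hs : IsSeparationScale l m n d) {κ : ℝ} (hκ : 0 ≤ κ) :
    Tendsto (fun k => devBound (n k) (d k) * (m k : ℝ) ^ κ) l (𝓝 0) := by
  refine squeeze_zero' (.of_forall fun k => mul_nonneg (devBound_pos _ _).le (by positivity)) ?_
    (hs.tendsto_rpow_mul_devBound hκ)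
  filter_upwards [hs.eventually_le] with k hk
  have := devBound_pos (n k) (d k)
  rw [mul_comm]
  gcongr

lemma tendsto_card_mul_devBound (hs : IsSeparationScale l m n d) {κ p : ℝ} (hκ : 0 ≤ κ)
    (hp : 0 ≤ p) :
    Tendsto (fun k => ((m k : ℝ) + 1) * (n k + 1) * devBound (n k) (d k) *
      (((n k : ℝ) - m k) ^ p * (m k : ℝ) ^ κ)) l (𝓝 0) := by
  have hlim := (hs.tendsto_rpow_mul_devBound (by positivity : 0 ≤ 2 + p + κ)).const_mul 4
  rw [mul_zero] at hlim
  refine squeeze_zero_norm' ?_ hlim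
  filter_upwards [hs.eventually_le, hs.tendsto_left.eventually_ge_atTop 1] with k hk hm
  have hk : (m k : ℝ) ≤ n k := by exact_mod_cast hk
  have hm : (1 : ℝ) ≤ m k := by exact_mod_cast hm
  have : 0 ≤ (n k : ℝ) - m k := sub_nonneg.2 hk
  have hn : (0 : ℝ) < n k := by linarith
  have := devBound_pos (n k) (d k)
  rw [Real.norm_of_nonneg (by positivity)]
  calc _ ≤ (n k + n k) * (n k + n k) * devBound (n k) (d k) *
        ((n k : ℝ) ^ p * (n k : ℝ) ^ κ) := by
        gcongr <;> linarith
    _ = 4 * ((n k : ℝ) ^ (2 + p + κ) * devBound (n k) (d k)) := by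
        rw [Real.rpow_add hn, Real.rpow_add hn, Real.rpow_two]
        ring

lemma tendsto_sum_mul_left_rpow (hs : IsSeparationScale l m n d) {κ K : ℝ} (hκ : 0 ≤ κ)
    (f : ℕ → ℝ) {h : ℕ → ℝ} (hh : Tendsto (fun n : ℕ => h n * (n : ℝ) ^ κ) atTop (𝓝 K)) (J : ℕ) :
    Tendsto (fun k => (∑ i ∈ Finset.range J, f i *
      ((1 - varRatio (n k) (d k)) * h (m k - i) - devBound (n k) (d k))) * (m k : ℝ) ^ κ) l
      (𝓝 ((∑ i ∈ Finset.range J, f i) * K)) := by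
  have hterm : ∀ i, Tendsto (fun k => f i *
      ((1 - varRatio (n k) (d k)) * (h (m k - i) * (m k : ℝ) ^ κ) -
        devBound (n k) (d k) * (m k : ℝ) ^ κ)) l (𝓝 (f i * ((1 - 0) * K - 0))) := fun i =>
    (((hs.tendsto_varRatio.const_sub 1).mul ((tendsto_sub_mul_rpow hh i).comp
      hs.tendsto_left)).sub (hs.tendsto_devBound_mul_left_rpow hκ)).const_mul (f i)
  have hlim := tendsto_finsetSum (Finset.range J) fun i _ => hterm i
  simp_rw [sub_zero, one_mul, ← Finset.sum_mul] at hlim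
  refine hlim.congr fun k => ?_
  rw [Finset.sum_mul]
  exact Finset.sum_congr rfl fun i _ => by ring

end IsSeparationScale

section BivariateTail

variable {f h : ℕ → ℝ} {F : ℕ → ℕ → ℝ} {p κ L K ℓ : ℝ}

lemma eventually_forall_le_div_rpow (hf0 : ∀ i, 0 ≤ f i) (hp : 0 ≤ p)
    (hfp : Tendsto (fun n : ℕ => f n * (n : ℝ) ^ p) atTop (𝓝 L)) (hℓ : L < ℓ) :
    ∀ᶠ x : ℝ in atTop, ∀ j : ℕ, x ≤ j → f j ≤ ℓ / x ^ p := by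
  obtain ⟨N, hN⟩ := eventually_atTop.1 (hfp.eventually_lt_const hℓ)
  filter_upwards [eventually_ge_atTop (N : ℝ), eventually_gt_atTop 0] with x hNx hx j hj
  have := hf0 j
  rw [le_div_iff₀ (by positivity)]
  calc f j * x ^ p ≤ f j * (j : ℝ) ^ p := by gcongr
    _ ≤ ℓ := (hN j (by exact_mod_cast hNx.trans hj)).le

lemma eventually_forall_div_rpow_le (hf0 : ∀ i, 0 ≤ f i) (hp : 0 ≤ p)
    (hfp : Tendsto (fun n : ℕ => f n * (n : ℝ) ^ p) atTop (𝓝 L)) (hℓ : ℓ < L) :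
    ∀ᶠ x : ℝ in atTop, ∀ z : ℝ, ∀ j : ℕ, x ≤ j → (j : ℝ) ≤ z → ℓ / z ^ p ≤ f j := by
  obtain ⟨N, hN⟩ := eventually_atTop.1 (hfp.eventually_const_lt hℓ)
  filter_upwards [eventually_ge_atTop (N : ℝ), eventually_gt_atTop 0] with x hNx hx z j hj hz
  have := hf0 j
  have : 0 < z := by linarith
  rw [div_le_iff₀ (by positivity)]
  calc ℓ ≤ f j * (j : ℝ) ^ p := (hN j (by exact_mod_cast hNx.trans hj)).le
    _ ≤ f j * z ^ p := by gcongr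

variable {ι : Type*} {l : Filter ι} {m n : ι → ℕ} {d : ι → ℝ}

lemma eventually_conv2_mul_rpow_lt (hF : ConcentratesNearDiagonal F h) (hf0 : ∀ i, 0 ≤ f i)
    (hf1 : ∀ i, f i ≤ 1) (hp : 0 ≤ p) (hκ : 0 ≤ κ) (hL : 0 ≤ L)
    (hfp : Tendsto (fun n : ℕ => f n * (n : ℝ) ^ p) atTop (𝓝 L))
    (hconv : Tendsto (fun n : ℕ => conv f h n * (n : ℝ) ^ κ) atTop (𝓝 K))
    (hs : IsSeparationScale l m n d) {c : ℝ} (hc : L * K < c) :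
    ∀ᶠ k in l, conv2 (fun i j => f i * f j) F (m k) (n k) *
      (((n k : ℝ) - m k) ^ p * (m k : ℝ) ^ κ) < c := by
  obtain ⟨ℓ, hℓc, hℓ : L < ℓ⟩ :=
    ((((continuous_mul_const K).tendsto L).mono_left nhdsWithin_le_nhds).eventually_lt_const hc
      |>.and self_mem_nhdsWithin).exists (f := 𝓝[>] L)
  have hlim := (((hs.tendsto_gap_div_gap_sub_rpow p).const_mul ℓ).mul
    (hconv.comp hs.tendsto_left)).add (hs.tendsto_card_mul_devBound hκ hp)
  rw [mul_one, add_zero] at hlim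
  filter_upwards [hlim.eventually_lt_const hℓc, hs.eventually_le,
    hs.tendsto_scale.eventually_gt_atTop 0, hs.tendsto_gap_sub.eventually_gt_atTop 0,
    hs.tendsto_gap_sub.eventually (eventually_forall_le_div_rpow hf0 hp hfp hℓ)]
    with k hlt hmn hd hgap hΦ
  have hℓ0 : 0 < ℓ := hL.trans_lt hℓ
  have hmn' : 0 ≤ (n k : ℝ) - m k := by linarith
  refine lt_of_le_of_lt ?_ hlt
  calc _ ≤ (ℓ / ((n k : ℝ) - m k - d k) ^ p * conv f h (m k) +
        (m k + 1) * (n k + 1) * devBound (n k) (d k)) *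
          (((n k : ℝ) - m k) ^ p * (m k : ℝ) ^ κ) := by
        gcongr
        exact hF.conv2_le hf0 hf1 hmn hd (by positivity) hΦ
    _ = _ := by
        rw [Real.div_rpow hmn' hgap.le, Function.comp_apply]
        ring

lemma eventually_lt_conv2_mul_rpow (hF : ConcentratesNearDiagonal F h) (hf0 : ∀ i, 0 ≤ f i)
    (hf : HasSum f 1) (hp : 0 ≤ p) (hκ : 0 ≤ κ) (hL : 0 < L)
    (hfp : Tendsto (fun n : ℕ => f n * (n : ℝ) ^ p) atTop (𝓝 L))
    (hh : Tendsto (fun n : ℕ => h n * (n : ℝ) ^ κ) atTop (𝓝 K))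
    (hs : IsSeparationScale l m n d) {c : ℝ} (hc : c < L * K) :
    ∀ᶠ k in l, c < conv2 (fun i j => f i * f j) F (m k) (n k) *
      (((n k : ℝ) - m k) ^ p * (m k : ℝ) ^ κ) := by
  have hJlim := (hf.tendsto_sum_nat.mul_const K).const_mul L
  rw [one_mul] at hJlim
  obtain ⟨J, hJ⟩ := (hJlim.eventually_const_lt hc).exists
  set S := ∑ i ∈ Finset.range J, f i
  obtain ⟨ℓ, ⟨hℓc, hℓ0⟩, hℓ : ℓ < L⟩ :=
    ((((continuous_mul_const (S * K)).tendsto L).eventually_const_lt hJ).and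
      (eventually_gt_nhds hL) |>.filter_mono nhdsWithin_le_nhds
      |>.and self_mem_nhdsWithin).exists (f := 𝓝[<] L)
  have hlim := ((hs.tendsto_gap_div_gap_add_rpow J p).const_mul ℓ).mul
    (hs.tendsto_sum_mul_left_rpow hκ f hh J)
  rw [mul_one] at hlim
  filter_upwards [hlim.eventually_const_lt hℓc, hs.tendsto_left.eventually_ge_atTop J,
    hs.tendsto_scale.eventually_gt_atTop 0, hs.eventually_two_mul_le_gap,
    hs.tendsto_gap_sub.eventually (eventually_forall_div_rpow_le hf0 hp hfp hℓ)]
    with k hlt hmJ hd hgap hφ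
  have hmn' : 0 ≤ (n k : ℝ) - m k := by linarith
  refine hlt.trans_le ?_
  calc _ = ℓ / ((n k : ℝ) - m k + J + d k) ^ p *
        (∑ i ∈ Finset.range J,
          f i * ((1 - varRatio (n k) (d k)) * h (m k - i) - devBound (n k) (d k))) *
          (((n k : ℝ) - m k) ^ p * (m k : ℝ) ^ κ) := by
        rw [Real.div_rpow hmn' (by positivity)]
        ring
    _ ≤ _ := by
        gcongr
        exact hF.le_conv2 hf0 hd (by linarith) (by lia) (by positivity) (hφ _)

lemma tendsto_conv2_mul_rpow (hF : ConcentratesNearDiagonal F h) (hf0 : ∀ i, 0 ≤ f i)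
    (hf : HasSum f 1) (hp : 0 ≤ p) (hκ : 0 ≤ κ) (hL : 0 < L)
    (hfp : Tendsto (fun n : ℕ => f n * (n : ℝ) ^ p) atTop (𝓝 L))
    (hh : Tendsto (fun n : ℕ => h n * (n : ℝ) ^ κ) atTop (𝓝 K))
    (hconv : Tendsto (fun n : ℕ => conv f h n * (n : ℝ) ^ κ) atTop (𝓝 K))
    (hs : IsSeparationScale l m n d) :
    Tendsto (fun k => conv2 (fun i j => f i * f j) F (m k) (n k) *
      (((n k : ℝ) - m k) ^ p * (m k : ℝ) ^ κ)) l (𝓝 (L * K)) :=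
  tendsto_order.2
    ⟨fun _ hc => eventually_lt_conv2_mul_rpow hF hf0 hf hp hκ hL hfp hh hs hc,
      fun _ hc => eventually_conv2_mul_rpow_lt hF hf0 (fun i => le_hasSum hf i fun j _ => hf0 j)
        hp hκ hL.le hfp hconv hs hc⟩

end BivariateTail

/-! ### The scale `δ_t` -/

lemma tendsto_log_two_add_natCast : Tendsto (fun t : ℕ => Real.log (2 + t)) atTop atTop :=
  Real.tendsto_log_atTop.comp (tendsto_atTop_add_const_left _ 2 tendsto_natCast_atTop_atTop)

lemma deltaFn_nonneg (t : ℕ) : 0 ≤ deltaFn t :=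
  mul_nonneg (Real.sqrt_nonneg _) (by positivity)

lemma deltaFn_sq (t : ℕ) : deltaFn t ^ 2 = t * Real.log (2 + t) ^ 8 := by
  rw [deltaFn, mul_pow, Real.sq_sqrt t.cast_nonneg, ← pow_mul]

lemma deltaFn_mono : Monotone deltaFn := fun s t hst => by
  have hlog : 0 ≤ Real.log (2 + s) := Real.log_nonneg (by linarith [s.cast_nonneg (α := ℝ)])
  unfold deltaFn
  gcongr

lemma tendsto_deltaFn : Tendsto deltaFn atTop atTop :=
  (Real.tendsto_sqrt_atTop.comp tendsto_natCast_atTop_atTop).atTop_mul_atTop₀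
    ((tendsto_pow_atTop four_ne_zero).comp tendsto_log_two_add_natCast)

lemma tendsto_varRatio_deltaFn :
    Tendsto (fun t : ℕ => varRatio t (deltaFn t)) atTop (𝓝 0) := by
  have hlim := (((tendsto_pow_atTop (by norm_num : 8 ≠ 0)).comp
    tendsto_log_two_add_natCast).const_div_atTop 4).add (tendsto_deltaFn.const_div_atTop 2)
  rw [add_zero] at hlim
  refine hlim.congr' ?_
  filter_upwards [eventually_gt_atTop 0, tendsto_log_two_add_natCast.eventually_gt_atTop 0,
    tendsto_deltaFn.eventually_gt_atTop 0] with t ht hlog hδ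
  have : (0 : ℝ) < t := by exact_mod_cast ht
  rw [varRatio, mul_add, add_div, Function.comp_apply]
  congr 1
  · rw [deltaFn_sq]
    field_simp
  · field_simp
    ring

lemma devBound_deltaFn_le {t : ℕ} (ht : 1 ≤ t) (hlog : 1 ≤ Real.log (2 + t)) :
    devBound t (deltaFn t) ≤ Real.exp (-(Real.log (2 + t) ^ 4 / 20)) := by
  have ht : (1 : ℝ) ≤ t := by exact_mod_cast ht
  have hpow : 1 ≤ Real.log (2 + t) ^ 4 := one_le_pow₀ hlog
  refine Real.exp_le_exp.2 (neg_le_neg ?_)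
  calc Real.log (2 + t) ^ 4 / 20
      = t * Real.log (2 + t) ^ 8 /
          (16 * (t * Real.log (2 + t) ^ 4) + 4 * (t * Real.log (2 + t) ^ 4)) := by
        field_simp
        ring
    _ ≤ deltaFn t ^ 2 / (16 * t + 4 * deltaFn t) := by
        have := deltaFn_nonneg t
        rw [deltaFn_sq, deltaFn]
        gcongr
        · exact le_mul_of_one_le_right (by positivity) hpow
        · exact Real.sqrt_le_iff.2 ⟨by positivity, le_self_pow₀ ht two_ne_zero⟩

lemma tendsto_rpow_mul_devBound_deltaFn {E : ℝ} (hE : 0 ≤ E) :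
    Tendsto (fun t : ℕ => (t : ℝ) ^ E * devBound t (deltaFn t)) atTop (𝓝 0) := by
  have hexp : Tendsto (fun x : ℝ => x * (E - x ^ 3 / 20)) atTop atBot :=
    tendsto_id.atTop_mul_atBot₀ (tendsto_atBot_add_const_left _ E
      (tendsto_neg_atTop_atBot.comp ((tendsto_pow_atTop three_ne_zero).atTop_div_const
        (by norm_num : (0 : ℝ) < 20))))
  refine squeeze_zero' (.of_forall fun t => mul_nonneg (by positivity) (devBound_pos _ _).le) ?_
    (Real.tendsto_exp_atBot.comp (hexp.comp tendsto_log_two_add_natCast))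
  filter_upwards [eventually_ge_atTop 1, tendsto_log_two_add_natCast.eventually_ge_atTop 1]
    with t ht hlog
  have := devBound_pos t (deltaFn t)
  calc (t : ℝ) ^ E * devBound t (deltaFn t)
      ≤ (2 + t : ℝ) ^ E * Real.exp (-(Real.log (2 + t) ^ 4 / 20)) := by
        gcongr
        · linarith
        · exact devBound_deltaFn_le ht hlog
    _ = Real.exp (Real.log (2 + t) * (E - Real.log (2 + t) ^ 3 / 20)) := by
        rw [Real.rpow_def_of_pos (by positivity), ← Real.exp_add]
        ring_nf

lemma isSeparationScale_deltaFn {ι : Type*} {l : Filter ι} {t₁ t₂ : ι → ℕ}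
    (ht₁ : Tendsto t₁ l atTop) (ht₂ : Tendsto t₂ l atTop)
    (hgap : Tendsto (fun k => ((t₂ k : ℝ) - t₁ k) / deltaFn (t₂ k)) l atTop) :
    IsSeparationScale l (fun k => t₁ k - 1) (fun k => t₂ k - 1) (fun k => deltaFn (t₂ k - 1)) := by
  have hpred := (tendsto_sub_atTop_nat 1).comp ht₂
  refine ⟨(tendsto_sub_atTop_nat 1).comp ht₁, tendsto_deltaFn.comp hpred,
    tendsto_atTop_mono' l ?_ hgap, tendsto_varRatio_deltaFn.comp hpred,
    fun hE => (tendsto_rpow_mul_devBound_deltaFn hE).comp hpred⟩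
  filter_upwards [ht₁.eventually_ge_atTop 1, ht₂.eventually_ge_atTop 1,
    (tendsto_deltaFn.comp hpred).eventually_gt_atTop 0,
    eventually_two_mul_le_of_tendsto_div (tendsto_deltaFn.comp ht₂) hgap] with k h₁ h₂ hδ hle
  have hnonneg : 0 ≤ (t₂ k : ℝ) - t₁ k := (mul_nonneg zero_le_two (deltaFn_nonneg _)).trans hle
  rw [Nat.cast_pred h₁, Nat.cast_pred h₂, sub_sub_sub_cancel_right]
  exact div_le_div_of_nonneg_left hnonneg hδ (deltaFn_mono (t₂ k).pred_le)

/-! ### The bidegree tail -/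

lemma tendsto_mul_rpow_of_lt {f : ℕ → ℝ} {κ κ' L : ℝ} (hκ : κ < κ')
    (hf : Tendsto (fun n : ℕ => f n * (n : ℝ) ^ κ') atTop (𝓝 L)) :
    Tendsto (fun n : ℕ => f n * (n : ℝ) ^ κ) atTop (𝓝 0) := by
  have hlim := hf.mul ((tendsto_rpow_neg_atTop (sub_pos.2 hκ)).comp tendsto_natCast_atTop_atTop)
  rw [mul_zero] at hlim
  refine hlim.congr' ?_
  filter_upwards [eventually_gt_atTop 0] with n hn
  have hn : (0 : ℝ) < n := by exact_mod_cast hn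
  rw [Function.comp_apply, mul_assoc, ← Real.rpow_add hn, neg_sub, add_sub_cancel]

lemma tendsto_mul_succ_rpow {ι : Type*} {l : Filter ι} {x : ι → ℝ} {m : ι → ℕ} {κ X : ℝ}
    (hm : Tendsto m l atTop) (hx : Tendsto (fun k => x k * (m k : ℝ) ^ κ) l (𝓝 X)) :
    Tendsto (fun k => x k * ((m k : ℝ) + 1) ^ κ) l (𝓝 X) := by
  have hratio := ((tendsto_natCast_div_add_atTop (1 : ℝ)).rpow_const (p := -κ)
    (.inl one_ne_zero)).comp hm
  have hlim := hx.mul hratio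
  rw [Real.one_rpow, mul_one] at hlim
  refine hlim.congr' ?_
  filter_upwards [hm.eventually_gt_atTop 0] with k hk
  have hk : (0 : ℝ) < m k := by exact_mod_cast hk
  rw [Function.comp_apply, Real.rpow_neg (by positivity), Real.div_rpow hk.le (by positivity)]
  field_simp

namespace IsPowerLawLayer

variable {a b α β mu : ℝ} {p q : ℕ → ℝ} {ι : Type*} {l : Filter ι}

lemma concentratesNearDiagonal_f2p (h : IsPowerLawLayer a b α β p q) :
    ConcentratesNearDiagonal (f2p p q) (mixBin (layerWeight p q 2 1) (· - 2) q) := by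
  rw [f2p_eq_mixBin₂]
  exact concentratesNearDiagonal_mixBin₂ (h.layerWeight_nonneg 2 1)
    (h.hasSum_layerWeight h.two_add_one_lt) h.mem_Icc

lemma tendsto_conv_barf1_mixBin_mul_rpow (h : IsPowerLawLayer a b α β p q) (hmu : 0 ≤ mu) :
    Tendsto (fun s : ℕ => conv (barf1 mu p q) (mixBin (layerWeight p q 2 1) (· - 2) q) s *
      (s : ℝ) ^ ((α - 2) / (1 - β))) atTop
      (𝓝 (a * b ^ ((α - 2) / (1 - β)) / ((1 - β) * mom p q 2 1))) := by
  have hlim := tendsto_conv_mul_rpow (h.barf1_nonneg hmu) (h.hasSum_barf1 hmu).summable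
    (mixBin_nonneg (h.layerWeight_nonneg 2 1) h.mem_Icc)
    (hasSum_mixBin (h.layerWeight_nonneg 2 1) (h.hasSum_layerWeight h.two_add_one_lt)
      h.mem_Icc).summable
    (zero_le_one.trans h.one_lt_tailExponent.le)
    (tendsto_mul_rpow_of_lt (lt_one_add _) (h.tendsto_barf1_mul_rpow hmu))
    h.tendsto_mixBin_layerWeight_two_one
  rwa [(h.hasSum_barf1 hmu).tsum_eq, one_mul, mul_zero, add_zero] at hlim

lemma tendsto_barf2_succ_mul_rpow (h : IsPowerLawLayer a b α β p q) (hmu : 0 < mu)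
    {m n : ι → ℕ} {d : ι → ℝ} (hs : IsSeparationScale l m n d) :
    Tendsto (fun k => barf2 mu p q (m k + 1) (n k + 1) *
      (((n k : ℝ) - m k) ^ (1 + (α - 2) / (1 - β)) * (m k : ℝ) ^ ((α - 2) / (1 - β)))) l
      (𝓝 (mu * a * b ^ ((α - 2) / (1 - β)) / (1 - β) *
        (a * b ^ ((α - 2) / (1 - β)) / ((1 - β) * mom p q 2 1)))) := by
  have ha := h.a_pos
  have hb := h.b_pos
  have hβ := h.one_sub_pos
  have hκ := zero_lt_one.trans h.one_lt_tailExponent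
  simp only [barf2, conv2_conv2_delta11_succ_succ]
  exact tendsto_conv2_mul_rpow h.concentratesNearDiagonal_f2p (h.barf1_nonneg hmu.le)
    (h.hasSum_barf1 hmu.le) (by positivity) hκ.le (by positivity) (h.tendsto_barf1_mul_rpow hmu.le)
    h.tendsto_mixBin_layerWeight_two_one (h.tendsto_conv_barf1_mixBin_mul_rpow hmu.le) hs

lemma tendsto_barf2_mul_rpow (h : IsPowerLawLayer a b α β p q) (hmu : 0 < mu)
    {t₁ t₂ : ι → ℕ} (ht₁ : Tendsto t₁ l atTop) (ht₂ : Tendsto t₂ l atTop)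
    (hgap : Tendsto (fun k => ((t₂ k : ℝ) - t₁ k) / deltaFn (t₂ k)) l atTop) :
    Tendsto (fun k => barf2 mu p q (t₁ k) (t₂ k) *
      ((t₂ k : ℝ) - t₁ k) ^ (1 + (α - 2) / (1 - β)) * (t₁ k : ℝ) ^ ((α - 2) / (1 - β))) l
      (𝓝 (mu * a * b ^ ((α - 2) / (1 - β)) / (1 - β) *
        (a * b ^ ((α - 2) / (1 - β)) / ((1 - β) * mom p q 2 1)))) := by
  have hs := isSeparationScale_deltaFn ht₁ ht₂ hgap
  have hlim := h.tendsto_barf2_succ_mul_rpow hmu hs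
  simp only [← mul_assoc] at hlim
  refine (tendsto_mul_succ_rpow hs.tendsto_left hlim).congr' ?_
  filter_upwards [ht₁.eventually_ge_atTop 1, ht₂.eventually_ge_atTop 1] with k h₁ h₂
  rw [Nat.sub_add_cancel h₁, Nat.sub_add_cancel h₂, Nat.cast_pred h₁, Nat.cast_pred h₂,
    sub_sub_sub_cancel_right, sub_add_cancel]

end IsPowerLawLayer

/-- **Theorem 2, eq. (9)** (Bloznelis–Karjalainen–Leskelä). Under the power-law layer type
distribution, with `δ_t = t^{1/2} ln⁴(2+t)`: for `t₁, t₂ → ∞` with `(t₂-t₁)/δ_{t₂} → ∞`,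
`P(D₁* = t₁, D₂* = t₂) = (1+o(1)) c'' (t₂-t₁)^{-1-(α-2)/(1-β)} t₁^{-(α-2)/(1-β)}` with
`c'' = μ a² b^{2(α-2)/(1-β)} (1-β)^{-2} P₂₁⁻¹`. -/
theorem barf2_joint_tail
    (mu a b α β : ℝ) (hmu : 0 < mu) (ha : 0 < a) (hb : 0 < b)
    (hα : 2 < α) (hβ0 : 0 ≤ β) (hβ1 : β < 1) (hαβ : 3 < α + β)
    (hb1 : β = 0 → b < 1)
    (p : ℕ → ℝ) (hpnn : ∀ x, 0 ≤ p x) (hpsum : HasSum p 1)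
    (hptail : Tendsto (fun x : ℕ => p x * (x : ℝ) ^ α) atTop (𝓝 a))
    (q : ℕ → ℝ) (hq : ∀ x : ℕ, q x = min 1 (b * (x : ℝ) ^ (-β)))
    (t1 t2 : ℕ → ℕ)
    (ht1 : Tendsto t1 atTop atTop) (ht2 : Tendsto t2 atTop atTop)
    (hgap : Tendsto (fun k : ℕ => ((t2 k : ℝ) - (t1 k : ℝ)) / deltaFn (t2 k)) atTop atTop) :
    Tendsto (fun k : ℕ =>
        barf2 mu p q (t1 k) (t2 k) *
          ((t2 k : ℝ) - (t1 k : ℝ)) ^ (1 + (α - 2) / (1 - β)) *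
          (t1 k : ℝ) ^ ((α - 2) / (1 - β))) atTop
      (𝓝 (mu * a ^ 2 * b ^ (2 * (α - 2) / (1 - β)) * ((1 - β) ^ 2)⁻¹ * (mom p q 2 1)⁻¹)) := by
  have hlayer : IsPowerLawLayer a b α β p q :=
    { b_pos := hb, β_nonneg := hβ0, β_lt_one := hβ1, b_lt_one := hb1, eq_min := hq,
      a_pos := ha, three_lt := hαβ, p_nonneg := hpnn, tendsto_p := hptail }
  have hexp : b ^ (2 * (α - 2) / (1 - β)) =
      b ^ ((α - 2) / (1 - β)) * b ^ ((α - 2) / (1 - β)) := by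
    rw [← Real.rpow_add hb, mul_div_assoc, two_mul]
  convert hlayer.tendsto_barf2_mul_rpow hmu ht1 ht2 hgap using 2
  rw [hexp]
  field_simp
end
end

section
/- For any probability distribution P on ℤ_+ × [0,1], one has P_{32}² ≤ P_{21}(P_{43} + P_{33}). -/
/-!
Since `(x)_{r+2} + (x)_{r+1} = (x - r) (x)_{r+1}` and `(x)_{r+1} = (x - r) (x)_r`, the falling
factorials satisfy `(x)_{r+1}² = (x)_r ((x)_{r+2} + (x)_{r+1})` exactly. Multiplying by
`y^{2t} = y^s y^u` shows that the square of the integrand on the left is the product of the two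
integrands on the right, and the inequality is Cauchy–Schwarz.
-/

open MeasureTheory
open scoped ENNReal

noncomputable section

/-- The cross moment `P_{rs} = E[(X)_r Y^s]` of a probability measure `P` on `ℤ₊ × [0,1]`,
where `(x)_r` is the falling factorial (value in `[0,∞]`). -/
def momL (Q : Measure (ℕ × ℝ)) (r s : ℕ) : ℝ≥0∞ :=
  ∫⁻ p, (p.1.descFactorial r : ℝ≥0∞) * ENNReal.ofReal (p.2 ^ s) ∂Q

theorem lintegral_sq_le_lintegral_mul_lintegral {α : Type*} [MeasurableSpace α] {μ : Measure α}
    {f g h : α → ℝ≥0∞} (hg : AEMeasurable g μ) (hh : AEMeasurable h μ)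
    (hfgh : ∀ᵐ a ∂μ, f a ^ 2 ≤ g a * h a) :
    (∫⁻ a, f a ∂μ) ^ 2 ≤ (∫⁻ a, g a ∂μ) * ∫⁻ a, h a ∂μ := by
  have le_rpow_iff_sq_le (x y z : ℝ≥0∞) :
      x ≤ y ^ (2⁻¹ : ℝ) * z ^ (2⁻¹ : ℝ) ↔ x ^ 2 ≤ y * z := by
    rw [← ENNReal.mul_rpow_of_nonneg _ _ (by norm_num), ENNReal.le_rpow_inv_iff two_pos,
      ENNReal.rpow_two]
  rw [← le_rpow_iff_sq_le]
  calc
    ∫⁻ a, f a ∂μ ≤ ∫⁻ a, g a ^ (2⁻¹ : ℝ) * h a ^ (2⁻¹ : ℝ) ∂μ :=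
      lintegral_mono_ae <| hfgh.mono fun a ha ↦ (le_rpow_iff_sq_le _ _ _).2 ha
    _ ≤ (∫⁻ a, g a ∂μ) ^ (2⁻¹ : ℝ) * (∫⁻ a, h a ∂μ) ^ (2⁻¹ : ℝ) :=
      ENNReal.lintegral_mul_norm_pow_le hg hh (by norm_num) (by norm_num) (by norm_num)

theorem descFactorial_succ_sq (n r : ℕ) :
    n.descFactorial (r + 1) ^ 2 =
      n.descFactorial r * (n.descFactorial (r + 2) + n.descFactorial (r + 1)) := by
  obtain hnr | hrn := le_or_gt n r
  · simp [Nat.sub_eq_zero_of_le hnr]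
  · obtain ⟨m, rfl⟩ := Nat.exists_eq_add_of_lt hrn
    have sub_r : r + m + 1 - r = m + 1 := by lia
    have sub_succ_r : r + m + 1 - (r + 1) = m := by lia
    simp only [Nat.descFactorial_succ, sub_r, sub_succ_r]
    ring

theorem measurable_natCast_mul_ofReal_pow (c : ℕ → ℕ) (s : ℕ) :
    Measurable fun p : ℕ × ℝ ↦ (c p.1 : ℝ≥0∞) * ENNReal.ofReal (p.2 ^ s) :=
  (Measurable.of_discrete (f := fun n ↦ (c n : ℝ≥0∞))).comp measurable_fst |>.mul (by fun_prop)

theorem momL_add_momL (Q : Measure (ℕ × ℝ)) (q r s : ℕ) :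
    momL Q q s + momL Q r s =
      ∫⁻ p, ((p.1.descFactorial q + p.1.descFactorial r : ℕ) : ℝ≥0∞) *
        ENNReal.ofReal (p.2 ^ s) ∂Q := by
  simp only [momL, Nat.cast_add, add_mul]
  exact (lintegral_add_left (measurable_natCast_mul_ofReal_pow (·.descFactorial q) s) _).symm

theorem moment_inequality_general (P : Measure (ℕ × ℝ)) (hP : ∀ᵐ p ∂P, 0 ≤ p.2)
    (r : ℕ) {s t u : ℕ} (hstu : s + u = 2 * t) :
    momL P (r + 1) t ^ 2 ≤ momL P r s * (momL P (r + 2) u + momL P (r + 1) u) := by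
  rw [momL_add_momL]
  refine lintegral_sq_le_lintegral_mul_lintegral
    (measurable_natCast_mul_ofReal_pow (·.descFactorial r) s).aemeasurable
    (measurable_natCast_mul_ofReal_pow
      (fun n ↦ n.descFactorial (r + 2) + n.descFactorial (r + 1)) u).aemeasurable ?_
  filter_upwards [hP] with ⟨n, y⟩ (hy : 0 ≤ y)
  have pow_sq : ENNReal.ofReal (y ^ t) ^ 2 = ENNReal.ofReal (y ^ s) * ENNReal.ofReal (y ^ u) := by
    simp only [ENNReal.ofReal_pow hy, ← pow_mul, ← pow_add, hstu, mul_comm t]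
  rw [mul_pow, pow_sq, ← Nat.cast_pow, descFactorial_succ_sq, Nat.cast_mul, mul_mul_mul_comm]

/-- **Lemma 1** (Bloznelis–Karjalainen–Leskelä; generalizes Remark 2 of
Bloznelis–Jaworski–Kurauskas). For any probability distribution `P` on `ℤ₊ × [0,1]`,
`P₃₂² ≤ P₂₁ (P₄₃ + P₃₃)`. -/
theorem moment_inequality
    (P : Measure (ℕ × ℝ)) [IsProbabilityMeasure P]
    (hsupp : P {p : ℕ × ℝ | p.2 ∈ Set.Icc (0:ℝ) 1} = 1) :
    momL P 3 2 ^ 2 ≤ momL P 2 1 * (momL P 4 3 + momL P 3 3) := by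
  have hY : ∀ᵐ p ∂P, p.2 ∈ Set.Icc (0 : ℝ) 1 :=
    (mem_ae_iff_prob_eq_one (measurable_snd measurableSet_Icc)).2 hsupp
  exact moment_inequality_general P (hY.mono fun _ hp ↦ hp.1) 2 rfl
end
end
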